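/- arXiv:2209.01934 — 2 statements merged into one kernel-verified Lean document; each statement's English description precedes it below -/
import Mathlib

section
/- Let N ≥ 1 and n ≥ N be integers and let L ≥ 0 be a real number with 2L a nonnegative integer. Then for every ζ ∈ ℂ the one-point correlation function of the symplectic induced spherical ensemble satisfies R_{N,1}(ζ) = (conj(ζ) − ζ) · κ̂_N(ζ, conj(ζ)) / (1+|ζ|²)^{2n+2L+2}. -/
open MeasureTheory Filter Finset

noncomputable section

namespace SI

/-- The weight `w(ζ) = |ζ|^{4L}(1+|ζ|²)^{-2(n+L+1)}`. -/
def wfun (n L : ℝ) (ζ : ℂ) : ℝ :=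
  ‖ζ‖ ^ (4*L) * (1 + ‖ζ‖ ^ 2) ^ (-(2*(n+L+1)))

/-- The (unnormalised) joint eigenvalue density of the symplectic induced
spherical ensemble. -/
def jointDen (N : ℕ) (n L : ℝ) (ζs : Fin N → ℂ) : ℝ :=
  (∏ j : Fin N, ∏ k ∈ Finset.Ioi j,
     ‖ζs j - ζs k‖ ^ 2 * ‖ζs j - (starRingEnd ℂ) (ζs k)‖ ^ 2) *
  ∏ j : Fin N, (‖ζs j - (starRingEnd ℂ) (ζs j)‖ ^ 2 * wfun n L (ζs j))

/-- The normalisation constant `Z_N` (the factor `π⁻ᴺ` accounts for `dA = d²ζ/π`). -/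
def ZN (N : ℕ) (n L : ℝ) : ℝ :=
  (Real.pi)⁻¹ ^ N * ∫ ζs : Fin N → ℂ, jointDen N n L ζs

/-- The one-point correlation function `R_{N,1}`. -/
def R1 (N : ℕ) (n L : ℝ) (ζ : ℂ) : ℝ :=
  N * (ZN N n L)⁻¹ * (Real.pi)⁻¹ ^ (N-1) *
    ∫ ζs : Fin (N-1) → ℂ, jointDen (N-1+1) n L (Fin.cons ζ ζs)

/-- The kernel `G_N(ζ,η)` built from the skew-orthogonal polynomials of the
symplectic induced spherical ensemble (all powers are principal-branch `cpow`s,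
which agree with the integer powers whenever `2L` is a nonnegative integer). -/
def GK (N : ℕ) (n L : ℝ) (ζ η : ℂ) : ℂ :=
  ((Real.pi : ℂ) * Complex.Gamma ((2*n+2*L+2 : ℝ) : ℂ) / (2:ℂ) ^ ((2*n+2*L+1 : ℝ) : ℂ)) *
  ∑ k ∈ range N, ∑ l ∈ range (k+1),
    ζ ^ ((2*k+2*L+1 : ℝ) : ℂ) * η ^ ((2*l+2*L : ℝ) : ℂ) /
      (Complex.Gamma ((k+L+3/2 : ℝ) : ℂ) * Complex.Gamma ((n-k : ℝ) : ℂ) *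
       Complex.Gamma ((n-l+1/2 : ℝ) : ℂ) * Complex.Gamma ((l+L+1 : ℝ) : ℂ))

/-- The skew-symmetric kernel `κ̂_N(ζ,η) = G_N(ζ,η) - G_N(η,ζ)`. -/
def KK (N : ℕ) (n L : ℝ) (ζ η : ℂ) : ℂ := GK N n L ζ η - GK N n L η ζ

/-!
The density is, up to the weight, the Vandermonde determinant in the `2N` points `ζ_j, conj ζ_j`.
Row operations replace the monomials by any monic polynomials of degrees `0, …, 2N-1`, and expanding
the determinant gives a sum over the permutations of the index set `Fin N × Fin 2`, each term of
which factors over the `ζ_j`. Take the monic skew-orthogonal polynomials: integrating a variable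
kills every permutation that does not send its pair of indices to a pair. With at most one variable
left unintegrated, only permutations of the blocks composed with swaps inside the blocks survive (if
all blocks but one are preserved, so is the last one), and each integrated variable contributes a
skew norm. Hence `R1` is the diagonal of the kernel `∑ (q_{2k+1} ∧ q_{2k}) / r_k`.

The weight is radial, so all skew products are moments of the weight, i.e. beta integrals; a
two-term recursion between consecutive moments gives the skew-orthogonality, and Legendre's
duplication formula identifies the kernel with the double sum of Gamma quotients in `GK`.
-/

section AlternatingPairSum

open Equiv (Perm)

variable {ι β R : Type*} [CommRing R]

/-- The element of the wreath product `Perm β ≀ Perm ι` acting on `ι × β`: it permutes the blocks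
`{j} × β` by `w.1` and the points of the block of `j` by `w.2 j`. -/
def wreathPerm (w : Perm ι × (ι → Perm β)) : Perm (ι × β) :=
  Equiv.prodCongrLeft (fun _ => w.1) * Equiv.prodCongrRight w.2

@[simp]
lemma wreathPerm_apply (w : Perm ι × (ι → Perm β)) (j : ι) (x : β) :
    wreathPerm w (j, x) = (w.1 j, w.2 j x) := by
  simp [wreathPerm]

lemma wreathPerm_injective [Nonempty β] :
    Function.Injective (wreathPerm : Perm ι × (ι → Perm β) → Perm (ι × β)) := by
  intro w w' h
  have hw (j x) : w.1 j = w'.1 j ∧ w.2 j x = w'.2 j x := by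
    simpa using congrArg (fun e => e (j, x)) h
  obtain ⟨b⟩ := ‹Nonempty β›
  exact Prod.ext (Equiv.ext fun j => (hw j b).1) (funext fun j => Equiv.ext fun x => (hw j x).2)

lemma exists_wreathPerm_eq [Finite ι] [Finite β] [Nonempty β] (σ : Perm (ι × β))
    (hσ : ∀ j x y, (σ (j, x)).1 = (σ (j, y)).1) : ∃ w, wreathPerm w = σ := by
  obtain ⟨b⟩ := ‹Nonempty β›
  have block_surjective : Function.Surjective fun j => (σ (j, b)).1 := fun k => by
    obtain ⟨⟨j, y⟩, hjy⟩ := σ.surjective (k, b)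
    exact ⟨j, by simp [hσ j b y, hjy]⟩
  have inner_injective (j) : Function.Injective fun x => (σ (j, x)).2 := fun x y hxy =>
    congrArg Prod.snd (σ.injective (Prod.ext (hσ j x y) hxy))
  refine ⟨(Equiv.ofBijective _ block_surjective.bijective_of_finite,
    fun j => Equiv.ofBijective _ (inner_injective j).bijective_of_finite), Equiv.ext ?_⟩
  rintro ⟨j, x⟩
  exact (wreathPerm_apply _ j x).trans (Prod.ext (hσ j b x) rfl)

lemma fst_apply_eq_of_forall_ne (σ : Perm (ι × Fin 2)) (i₀ : ι)
    (hσ : ∀ j ≠ i₀, (σ (j, 0)).1 = (σ (j, 1)).1) (j : ι) (x y : Fin 2) :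
    (σ (j, x)).1 = (σ (j, y)).1 := by
  suffices h : ∀ j, (σ (j, 0)).1 = (σ (j, 1)).1 by
    fin_cases x <;> fin_cases y <;> simp [h j]
  intro j
  by_cases hj : j = i₀
  · subst hj
    obtain ⟨⟨k, y⟩, hky⟩ := σ.surjective ((σ (j, 0)).1, 1 - (σ (j, 0)).2)
    by_cases hk : k = j
    · subst hk
      have hy : y ≠ 0 := by
        rintro rfl
        have : ∀ x : Fin 2, x ≠ 1 - x := by decide
        exact this _ (congrArg Prod.snd hky)
      rw [← Fin.eq_one_of_ne_zero y hy, hky]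
    · have pigeonhole : ∀ a b c : Fin 2, a = b ∨ b = c ∨ a = c := by decide
      have hblock : (σ (j, 0)).1 = (σ (k, 0)).1 := by
        fin_cases y <;> simp_all
      have hblock' := hblock.trans (hσ k hk)
      exfalso
      rcases pigeonhole (σ (j, 0)).2 (σ (k, 0)).2 (σ (k, 1)).2 with h | h | h
      · exact hk (congrArg Prod.fst (σ.injective (Prod.ext hblock h))).symm
      · simpa using σ.injective (Prod.ext (hσ k hk) h)
      · exact hk (congrArg Prod.fst (σ.injective (Prod.ext hblock' h))).symm
  · exact hσ j hj

variable [Fintype ι] [DecidableEq ι]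

lemma sign_wreathPerm (w : Perm ι × (ι → Perm (Fin 2))) :
    Perm.sign (wreathPerm w) = ∏ j, Perm.sign (w.2 j) := by
  simp [wreathPerm, Perm.sign_prodCongrRight, Perm.sign_prodCongrLeft, Int.units_sq]

/-- The alternating sum over all ways of distributing the index set `ι × Fin 2` in ordered pairs
over `ι`. For `T j a b = f a (x j) * g b (x j)` it is the determinant of size `2 |ι|` with columns
`f (x j)` and `g (x j)`, as in de Bruijn's integration formula. -/
def alternatingPairSum (T : ι → ι × Fin 2 → ι × Fin 2 → R) : R :=
  ∑ σ : Perm (ι × Fin 2), ((Perm.sign σ : ℤ) : R) * ∏ j, T j (σ (j, 0)) (σ (j, 1))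

lemma alternatingPairSum_mul (T : ι → ι × Fin 2 → ι × Fin 2 → R) (c : ι → R) :
    (alternatingPairSum fun j a b => T j a b * c j) = alternatingPairSum T * ∏ j, c j := by
  simp only [alternatingPairSum, Finset.prod_mul_distrib, Finset.sum_mul, mul_assoc]

lemma det_eq_alternatingPairSum (A : Matrix (ι × Fin 2) (ι × Fin 2) R) :
    A.det = alternatingPairSum fun j a b => A a (j, 0) * A b (j, 1) := by
  simp [Matrix.det_apply', alternatingPairSum, Fintype.prod_prod_type]

lemma prod_sub_eq_sum_prod_sign (T : ι → Fin 2 → Fin 2 → R) :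
    ∏ j, (T j 0 1 - T j 1 0) =
      ∑ s : ι → Perm (Fin 2), ∏ j, ((Perm.sign (s j) : ℤ) : R) * T j (s j 0) (s j 1) := by
  have huniv : (univ : Finset (Perm (Fin 2))) = {1, Equiv.swap 0 1} := by decide
  rw [← Fintype.prod_sum fun j s => ((Perm.sign s : ℤ) : R) * T j (s 0) (s 1)]
  simp [huniv, Finset.sum_pair (show (1 : Perm (Fin 2)) ≠ Equiv.swap 0 1 by decide),
    sub_eq_add_neg]

lemma alternatingPairSum_eq_sum_perm (T : ι → ι × Fin 2 → ι × Fin 2 → R) (i₀ : ι)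
    (hT : ∀ j ≠ i₀, ∀ a b, a.1 ≠ b.1 → T j a b = 0) :
    alternatingPairSum T =
      ∑ p : Perm ι, ∏ j, (T j (p j, 0) (p j, 1) - T j (p j, 1) (p j, 0)) := by
  simp_rw [fun p : Perm ι => prod_sub_eq_sum_prod_sign fun j x y => T j (p j, x) (p j, y)]
  rw [← Fintype.sum_prod_type' fun (p : Perm ι) (s : ι → Perm (Fin 2)) =>
    ∏ j, ((Perm.sign (s j) : ℤ) : R) * T j (p j, s j 0) (p j, s j 1)]
  symm
  refine Finset.sum_of_injOn wreathPerm wreathPerm_injective.injOn (by simp) ?_ ?_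
  · intro σ _ hσ
    obtain ⟨j, hj, hne⟩ : ∃ j ≠ i₀, (σ (j, 0)).1 ≠ (σ (j, 1)).1 := by
      by_contra! h
      obtain ⟨w, hw⟩ := exists_wreathPerm_eq σ (fst_apply_eq_of_forall_ne σ i₀ h)
      exact hσ ⟨w, by simp, hw⟩
    rw [Finset.prod_eq_zero (mem_univ j) (hT j hj _ _ hne), mul_zero]
  · rintro ⟨p, s⟩ -
    simp only [wreathPerm_apply, sign_wreathPerm, Finset.prod_mul_distrib]
    push_cast
    rfl

end AlternatingPairSum

section SkewOrthogonal

variable {X 𝕜 : Type*} [MeasurableSpace X] [RCLike 𝕜] {μ : Measure X} [SigmaFinite μ]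

lemma integral_alternatingPairSum {ι : Type*} [Fintype ι] [DecidableEq ι]
    {F : ι × Fin 2 → ι × Fin 2 → X → 𝕜} (hF : ∀ a b, Integrable (F a b) μ) :
    ∫ x : ι → X, alternatingPairSum (fun j a b => F a b (x j)) ∂Measure.pi (fun _ => μ) =
      alternatingPairSum fun _ a b => ∫ y, F a b y ∂μ := by
  unfold alternatingPairSum
  rw [integral_finsetSum _ fun σ _ => (Integrable.fintype_prod fun j => hF _ _).const_mul _]
  refine Finset.sum_congr rfl fun σ _ => ?_
  rw [integral_const_mul, integral_fintype_prod_eq_prod fun j => F (σ (j, 0)) (σ (j, 1))]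

lemma integral_alternatingPairSum_cons {m : ℕ}
    {F : Fin (m + 1) × Fin 2 → Fin (m + 1) × Fin 2 → X → 𝕜} (hF : ∀ a b, Integrable (F a b) μ)
    (x : X) :
    ∫ xs : Fin m → X, alternatingPairSum
        (fun j a b => F a b ((Fin.cons x xs : Fin (m + 1) → X) j)) ∂Measure.pi (fun _ => μ) =
      alternatingPairSum fun j a b => if j = 0 then F a b x else ∫ y, F a b y ∂μ := by
  simp only [alternatingPairSum, Fin.prod_univ_succ, Fin.cons_zero, Fin.cons_succ, if_true,
    Fin.succ_ne_zero, if_false]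
  rw [integral_finsetSum _ fun σ _ =>
    ((Integrable.fintype_prod fun j => hF _ _).const_mul _).const_mul _]
  refine Finset.sum_congr rfl fun σ _ => ?_
  rw [integral_const_mul, integral_const_mul,
    integral_fintype_prod_eq_prod fun j : Fin m => F (σ (j.succ, 0)) (σ (j.succ, 1))]

lemma sum_perm_apply_zero {R : Type*} [NonAssocSemiring R] {m : ℕ} (f : Fin (m + 1) → R) :
    ∑ p : Equiv.Perm (Fin (m + 1)), f (p 0) = m.factorial * ∑ k, f k := by
  rw [← Equiv.sum_comp Equiv.Perm.decomposeFin.symm, Fintype.sum_prod_type, Finset.mul_sum]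
  simp [Equiv.Perm.decomposeFin_symm_apply_zero, Fintype.card_perm]

variable {m : ℕ} {F : Fin (m + 1) × Fin 2 → Fin (m + 1) × Fin 2 → X → 𝕜} {r : Fin (m + 1) → 𝕜}

lemma integral_alternatingPairSum_of_skewOrthogonal (hF : ∀ a b, Integrable (F a b) μ)
    (horth : ∀ a b, a.1 ≠ b.1 → ∫ y, F a b y ∂μ = 0)
    (hr : ∀ k, ∫ y, F (k, 0) (k, 1) y ∂μ - ∫ y, F (k, 1) (k, 0) y ∂μ = r k) :
    ∫ x : Fin (m + 1) → X, alternatingPairSum (fun j a b => F a b (x j))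
        ∂Measure.pi (fun _ => μ) =
      (m + 1).factorial * ∏ k, r k := by
  rw [integral_alternatingPairSum hF, alternatingPairSum_eq_sum_perm _ 0 fun _ _ => horth]
  simp [hr, Equiv.prod_comp, Fintype.card_perm]

lemma integral_alternatingPairSum_cons_of_skewOrthogonal (hF : ∀ a b, Integrable (F a b) μ)
    (horth : ∀ a b, a.1 ≠ b.1 → ∫ y, F a b y ∂μ = 0)
    (hr : ∀ k, ∫ y, F (k, 0) (k, 1) y ∂μ - ∫ y, F (k, 1) (k, 0) y ∂μ = r k)
    (hr₀ : ∀ k, r k ≠ 0) (x : X) :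
    ∫ xs : Fin m → X, alternatingPairSum
        (fun j a b => F a b ((Fin.cons x xs : Fin (m + 1) → X) j)) ∂Measure.pi (fun _ => μ) =
      m.factorial * ∑ k, (F (k, 0) (k, 1) x - F (k, 1) (k, 0) x) / r k * ∏ l, r l := by
  rw [integral_alternatingPairSum_cons hF,
    alternatingPairSum_eq_sum_perm _ 0 fun j hj a b hab => by simpa [hj] using horth a b hab,
    ← sum_perm_apply_zero fun k => (F (k, 0) (k, 1) x - F (k, 1) (k, 0) x) / r k * ∏ l, r l]
  refine Finset.sum_congr rfl fun p _ => ?_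
  simp only [← Equiv.prod_comp p r, Fin.prod_univ_succ, if_true, Fin.succ_ne_zero, if_false, hr]
  rw [← mul_assoc, div_mul_cancel₀ _ (hr₀ _)]

lemma onePoint_eq_sum_of_skewOrthogonal (hF : ∀ a b, Integrable (F a b) μ)
    (horth : ∀ a b, a.1 ≠ b.1 → ∫ y, F a b y ∂μ = 0)
    (hr : ∀ k, ∫ y, F (k, 0) (k, 1) y ∂μ - ∫ y, F (k, 1) (k, 0) y ∂μ = r k)
    (hr₀ : ∀ k, r k ≠ 0) (x : X) :
    (m + 1) *
        (∫ y : Fin (m + 1) → X, alternatingPairSum (fun j a b => F a b (y j))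
          ∂Measure.pi (fun _ => μ))⁻¹ *
        ∫ xs : Fin m → X, alternatingPairSum
          (fun j a b => F a b ((Fin.cons x xs : Fin (m + 1) → X) j)) ∂Measure.pi (fun _ => μ) =
      ∑ k, (F (k, 0) (k, 1) x - F (k, 1) (k, 0) x) / r k := by
  have hprod : ∏ k, r k ≠ 0 := Finset.prod_ne_zero_iff.mpr fun k _ => hr₀ k
  have hfac : (m.factorial : 𝕜) ≠ 0 := mod_cast m.factorial_ne_zero
  have hm : (m : 𝕜) + 1 ≠ 0 := mod_cast m.succ_ne_zero
  rw [integral_alternatingPairSum_of_skewOrthogonal hF horth hr,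
    integral_alternatingPairSum_cons_of_skewOrthogonal hF horth hr hr₀, ← Finset.sum_mul,
    Nat.factorial_succ]
  push_cast
  field_simp

end SkewOrthogonal

section Vandermonde

variable {R : Type*} [CommRing R] {N : ℕ}

lemma det_vandermonde_finProdFinEquiv (x : Fin N × Fin 2 → R) :
    (Matrix.vandermonde (x ∘ finProdFinEquiv.symm)).det =
      (∏ i, ∏ j ∈ Ioi i, (x (j, 0) - x (i, 0)) * (x (j, 1) - x (i, 0)) *
        ((x (j, 0) - x (i, 1)) * (x (j, 1) - x (i, 1)))) * ∏ i, (x (i, 1) - x (i, 0)) := by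
  have prod_Ioi (n : ℕ) (f : Fin n → Fin n → R) :
      ∏ i, ∏ j ∈ Ioi i, f i j = ∏ i, ∏ j, if i < j then f i j else 1 := by
    simp [← Finset.prod_filter, Finset.filter_lt_eq_Ioi]
  have prod_diag (i : Fin N) :
      x (i, 1) - x (i, 0) = ∏ j, if i = j then x (j, 1) - x (j, 0) else 1 := by simp
  rw [Matrix.det_vandermonde, prod_Ioi, prod_Ioi, ← Equiv.prod_comp finProdFinEquiv,
    Fintype.prod_prod_type, ← Finset.prod_mul_distrib]
  refine Finset.prod_congr rfl fun i _ => ?_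
  simp_rw [← Equiv.prod_comp (finProdFinEquiv (m := N) (n := 2)), Fintype.prod_prod_type]
  rw [Finset.prod_comm, prod_diag, ← Finset.prod_mul_distrib]
  refine Finset.prod_congr rfl fun j _ => ?_
  have lt_iff (s t : Fin 2) :
      finProdFinEquiv (i, s) < finProdFinEquiv (j, t) ↔ i < j ∨ i = j ∧ s < t := by
    simp only [Fin.lt_def, finProdFinEquiv_apply_val, Fin.ext_iff]
    omega
  simp only [Function.comp_apply, Equiv.symm_apply_apply, lt_iff, Fin.prod_univ_two]
  rcases lt_trichotomy i j with h | rfl | h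
  · simp [h, h.ne]
  · simp
  · simp [h.not_gt, h.ne']

lemma det_eval_eq_prod_of_monic (q : Fin N × Fin 2 → Polynomial R) (hq : ∀ a, (q a).Monic)
    (hdeg : ∀ a, (q a).natDegree = 2 * (a.1 : ℕ) + a.2) (x : Fin N × Fin 2 → R) :
    (Matrix.of fun a b => (q a).eval (x b)).det =
      (∏ i, ∏ j ∈ Ioi i, (x (j, 0) - x (i, 0)) * (x (j, 1) - x (i, 0)) *
        ((x (j, 0) - x (i, 1)) * (x (j, 1) - x (i, 1)))) * ∏ i, (x (i, 1) - x (i, 0)) := by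
  rw [← det_vandermonde_finProdFinEquiv,
    Matrix.det_eval_matrixOfPolynomials_eq_det_vandermonde _ (q ∘ finProdFinEquiv.symm)
      (fun i => ?_) (fun i => hq _), ← Matrix.det_transpose,
    ← Matrix.det_submatrix_equiv_self finProdFinEquiv.symm]
  · rfl
  · obtain ⟨a, rfl⟩ := finProdFinEquiv.surjective i
    simp [hdeg, add_comm]

end Vandermonde

/-- The integrand of the skew product of `f` and `g`; antisymmetrising it in `f` and `g` gives the
integrand of the paper's skew product `⟨f, g⟩ₛ`. -/
def skewIntegrand (n L : ℝ) (f g : Polynomial ℂ) (ζ : ℂ) : ℂ :=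
  f.eval ζ * g.eval ((starRingEnd ℂ) ζ) * ((ζ - (starRingEnd ℂ) ζ) * wfun n L ζ)

lemma jointDen_eq_alternatingPairSum {N : ℕ} (n L : ℝ) (q : Fin N × Fin 2 → Polynomial ℂ)
    (hq : ∀ a, (q a).Monic) (hdeg : ∀ a, (q a).natDegree = 2 * (a.1 : ℕ) + a.2)
    (ζs : Fin N → ℂ) :
    (jointDen N n L ζs : ℂ) =
      alternatingPairSum fun j a b => skewIntegrand n L (q a) (q b) (ζs j) := by
  have norm_sq (z : ℂ) : (‖z‖ : ℂ) ^ 2 = z * (starRingEnd ℂ) z := (Complex.mul_conj' z).symm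
  have hdet := (det_eq_alternatingPairSum _).symm.trans <| det_eval_eq_prod_of_monic q hq hdeg
    fun a => ![ζs a.1, (starRingEnd ℂ) (ζs a.1)] a.2
  simp only [Matrix.of_apply, Matrix.cons_val_zero, Matrix.cons_val_one] at hdet
  simp only [skewIntegrand]
  rw [alternatingPairSum_mul, hdet, mul_assoc, ← Finset.prod_mul_distrib, jointDen]
  push_cast
  congr 1 <;> refine Finset.prod_congr rfl fun i _ => ?_
  · refine Finset.prod_congr rfl fun j _ => ?_
    simp only [norm_sq, map_sub, Complex.conj_conj]
    ring
  · simp only [norm_sq, map_sub, Complex.conj_conj]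
    ring

section Beta

open ProbabilityTheory

variable {p q : ℝ}

lemma betaPDFReal_nonneg (hp : 0 < p) (hq : 0 < q) (x : ℝ) : 0 ≤ betaPDFReal p q x := by
  by_cases hx : 0 < x ∧ x < 1
  · exact (betaPDFReal_pos hx.1 hx.2 hp hq).le
  · simp [betaPDFReal, hx]

lemma integrable_betaPDFReal (hp : 0 < p) (hq : 0 < q) : Integrable (betaPDFReal p q) := by
  refine ⟨(stronglyMeasurable_betaPDFReal p q).aestronglyMeasurable, ?_⟩
  rw [hasFiniteIntegral_iff_ofReal (ae_of_all _ (betaPDFReal_nonneg hp hq))]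
  exact (lintegral_betaPDF_eq_one hp hq).trans_lt ENNReal.one_lt_top

lemma integral_betaPDFReal (hp : 0 < p) (hq : 0 < q) : ∫ x, betaPDFReal p q x = 1 := by
  rw [integral_eq_lintegral_of_nonneg_ae (ae_of_all _ (betaPDFReal_nonneg hp hq))
    (stronglyMeasurable_betaPDFReal p q).aestronglyMeasurable]
  exact congrArg ENNReal.toReal (lintegral_betaPDF_eq_one hp hq)

lemma injOn_sq_div_one_add_sq :
    Set.InjOn (fun r : ℝ => r ^ 2 / (1 + r ^ 2)) (Set.Ioi 0) := by
  intro r hr s hs h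
  have hrs : r ^ 2 = s ^ 2 := by
    field_simp at h
    linarith
  exact (pow_left_inj₀ (le_of_lt hr) (le_of_lt hs) two_ne_zero).mp hrs

lemma image_sq_div_one_add_sq :
    (fun r : ℝ => r ^ 2 / (1 + r ^ 2)) '' Set.Ioi 0 = Set.Ioo 0 1 := by
  ext u
  constructor
  · rintro ⟨r, hr, rfl⟩
    have hr : 0 < r := hr
    exact ⟨by positivity, (div_lt_one (by positivity)).mpr (by linarith)⟩
  · rintro ⟨hu₀, hu₁⟩
    have : 0 < 1 - u := by linarith
    refine ⟨√(u / (1 - u)), Real.sqrt_pos.mpr (by positivity), ?_⟩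
    simp only [Real.sq_sqrt (by positivity : 0 ≤ u / (1 - u))]
    field_simp
    ring

lemma hasDerivAt_sq_div_one_add_sq (r : ℝ) :
    HasDerivAt (fun r : ℝ => r ^ 2 / (1 + r ^ 2)) (2 * r / (1 + r ^ 2) ^ 2) r := by
  have hsq := hasDerivAt_pow 2 r
  refine (hsq.div (hsq.const_add 1) (by positivity)).congr_deriv ?_
  push_cast
  ring

lemma abs_smul_betaPDFReal_sq_div_one_add_sq {r : ℝ} (hr : r ∈ Set.Ioi 0) :
    |2 * r / (1 + r ^ 2) ^ 2| • betaPDFReal p q (r ^ 2 / (1 + r ^ 2)) =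
      2 / beta p q * (r ^ (2 * p - 1) * (1 + r ^ 2) ^ (-(p + q))) := by
  replace hr : 0 < r := hr
  have hu : 0 < r ^ 2 / (1 + r ^ 2) ∧ r ^ 2 / (1 + r ^ 2) < 1 :=
    ⟨by positivity, (div_lt_one (by positivity)).mpr (by linarith)⟩
  have hone_sub : 1 - r ^ 2 / (1 + r ^ 2) = (1 + r ^ 2)⁻¹ := by
    field_simp
    ring
  have hnum : r ^ (2 * p - 1) = r * (r ^ 2) ^ (p - 1) := by
    rw [show 2 * p - 1 = 1 + (2 : ℕ) * (p - 1) by push_cast; ring, Real.rpow_add hr,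
      Real.rpow_one, Real.rpow_natCast_mul hr.le]
  have hpos : 0 < 1 + r ^ 2 := by positivity
  have hden : (1 + r ^ 2) ^ (-(p + q)) =
      ((1 + r ^ 2) ^ 2)⁻¹ * (((1 + r ^ 2) ^ (p - 1))⁻¹ * ((1 + r ^ 2) ^ (q - 1))⁻¹) := by
    rw [show -(p + q) = -(2 : ℕ) + (-(p - 1) + -(q - 1)) by push_cast; ring,
      Real.rpow_add hpos, Real.rpow_add hpos, Real.rpow_neg hpos.le, Real.rpow_neg hpos.le,
      Real.rpow_neg hpos.le, Real.rpow_natCast]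
  rw [betaPDFReal, if_pos hu, hone_sub, Real.div_rpow (by positivity) (by positivity),
    Real.inv_rpow (by positivity), hnum, hden, abs_of_pos (by positivity), smul_eq_mul]
  ring

lemma integrableOn_rpow_mul_one_add_sq_rpow (hp : 0 < p) (hq : 0 < q) :
    IntegrableOn (fun r : ℝ => r ^ (2 * p - 1) * (1 + r ^ 2) ^ (-(p + q))) (Set.Ioi 0) := by
  have h := (integrableOn_image_iff_integrableOn_abs_deriv_smul measurableSet_Ioi
    (fun r _ => (hasDerivAt_sq_div_one_add_sq r).hasDerivWithinAt) injOn_sq_div_one_add_sq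
    (betaPDFReal p q)).mp (integrable_betaPDFReal hp hq).integrableOn
  rw [integrableOn_congr_fun (fun r hr => abs_smul_betaPDFReal_sq_div_one_add_sq hr)
    measurableSet_Ioi] at h
  exact (integrable_const_mul_iff (div_pos two_pos (beta_pos hp hq)).ne'.isUnit _).mp h

lemma integral_rpow_mul_one_add_sq_rpow (hp : 0 < p) (hq : 0 < q) :
    ∫ r in Set.Ioi (0 : ℝ), r ^ (2 * p - 1) * (1 + r ^ 2) ^ (-(p + q)) = beta p q / 2 := by
  have h : ∫ r in Set.Ioi (0 : ℝ), |2 * r / (1 + r ^ 2) ^ 2| •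
      betaPDFReal p q (r ^ 2 / (1 + r ^ 2)) = 1 := by
    rw [← integral_image_eq_integral_abs_deriv_smul measurableSet_Ioi
      (fun r _ => (hasDerivAt_sq_div_one_add_sq r).hasDerivWithinAt) injOn_sq_div_one_add_sq,
      image_sq_div_one_add_sq, setIntegral_eq_integral_of_forall_compl_eq_zero,
      integral_betaPDFReal hp hq]
    intro u hu
    exact if_neg hu
  rw [setIntegral_congr_fun measurableSet_Ioi fun r hr =>
    abs_smul_betaPDFReal_sq_div_one_add_sq hr, integral_const_mul] at h
  have := (beta_pos hp hq).ne'
  field_simp at h ⊢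
  linarith

end Beta

section Moments

open ProbabilityTheory

variable {n L : ℝ} {d : ℕ}

lemma pow_smul_wfun_profile {r : ℝ} (hr : r ∈ Set.Ioi 0) :
    r ^ (Module.finrank ℝ ℂ - 1) • (r ^ d * (r ^ (4 * L) * (1 + r ^ 2) ^ (-(2 * (n + L + 1))))) =
      r ^ (2 * (d / 2 + 2 * L + 1) - 1) *
        (1 + r ^ 2) ^ (-((d / 2 + 2 * L + 1) + (2 * n + 1 - d / 2))) := by
  rw [Complex.finrank_real_complex, pow_one, smul_eq_mul,
    show 2 * ((d : ℝ) / 2 + 2 * L + 1) - 1 = 1 + d + 4 * L by ring,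
    show (d : ℝ) / 2 + 2 * L + 1 + (2 * n + 1 - d / 2) = 2 * (n + L + 1) by ring,
    Real.rpow_add hr, Real.rpow_add hr, Real.rpow_one, Real.rpow_natCast]
  ring

lemma integrable_norm_pow_mul_wfun (hL : -1 / 2 < L) (hd : d < 4 * n + 2) :
    Integrable fun ζ : ℂ => ‖ζ‖ ^ d * wfun n L ζ := by
  refine (integrable_fun_norm_addHaar volume
    (f := fun r => r ^ d * (r ^ (4 * L) * (1 + r ^ 2) ^ (-(2 * (n + L + 1)))))).mpr ?_
  rw [integrableOn_congr_fun (fun r hr => pow_smul_wfun_profile hr) measurableSet_Ioi]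
  have : (0 : ℝ) ≤ d := d.cast_nonneg
  exact integrableOn_rpow_mul_one_add_sq_rpow (by linarith) (by linarith)

lemma integral_norm_pow_mul_wfun (hL : -1 / 2 < L) (hd : d < 4 * n + 2) :
    ∫ ζ : ℂ, ‖ζ‖ ^ d * wfun n L ζ = Real.pi * beta (d / 2 + 2 * L + 1) (2 * n + 1 - d / 2) := by
  have : (0 : ℝ) ≤ d := d.cast_nonneg
  refine (integral_fun_norm_addHaar volume
    fun r => r ^ d * (r ^ (4 * L) * (1 + r ^ 2) ^ (-(2 * (n + L + 1))))).trans ?_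
  rw [setIntegral_congr_fun measurableSet_Ioi fun r hr => pow_smul_wfun_profile hr,
    integral_rpow_mul_one_add_sq_rpow (by linarith) (by linarith), Complex.finrank_real_complex,
    Measure.real, Complex.volume_ball]
  simp
  ring

lemma measurable_wfun : Measurable (wfun n L) := by
  unfold wfun
  fun_prop

lemma wfun_nonneg (ζ : ℂ) : 0 ≤ wfun n L ζ := by
  unfold wfun
  positivity

lemma wfun_eq_of_norm_eq {ζ η : ℂ} (h : ‖ζ‖ = ‖η‖) : wfun n L ζ = wfun n L η := by
  simp only [wfun, h]

lemma integrable_pow_mul_conj_pow_mul_wfun {a b : ℕ} (hL : -1 / 2 < L) (hab : a + b < 4 * n + 2) :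
    Integrable fun ζ : ℂ => ζ ^ a * (starRingEnd ℂ) ζ ^ b * (wfun n L ζ : ℂ) := by
  have hmeas : Measurable fun ζ : ℂ => ζ ^ a * (starRingEnd ℂ) ζ ^ b * (wfun n L ζ : ℂ) := by
    have := measurable_wfun (n := n) (L := L)
    have := Complex.continuous_conj.measurable
    fun_prop
  refine (integrable_norm_pow_mul_wfun (d := a + b) hL (mod_cast hab)).mono'
    hmeas.aestronglyMeasurable (ae_of_all _ fun ζ => le_of_eq ?_)
  simp [pow_add, abs_of_nonneg (wfun_nonneg ζ)]

/-- The moment `∫ |ζ|^{2a} w(ζ) d²ζ` of the weight. -/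
def moment (n L : ℝ) (a : ℕ) : ℝ :=
  Real.pi * beta (a + 2 * L + 1) (2 * n + 1 - a)

lemma moment_pos {a : ℕ} (hL : -1 / 2 < L) (ha : a < 2 * n + 1) : 0 < moment n L a :=
  mul_pos Real.pi_pos <|
    beta_pos (by linarith [(a.cast_nonneg : (0 : ℝ) ≤ a)]) (by linarith)

lemma integral_pow_mul_conj_pow_mul_wfun_self {a : ℕ} (hL : -1 / 2 < L) (ha : a < 2 * n + 1) :
    ∫ ζ : ℂ, ζ ^ a * (starRingEnd ℂ) ζ ^ a * (wfun n L ζ : ℂ) = moment n L a := by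
  have hradial (ζ : ℂ) : ζ ^ a * (starRingEnd ℂ) ζ ^ a * (wfun n L ζ : ℂ) =
      ((‖ζ‖ ^ (2 * a) * wfun n L ζ : ℝ) : ℂ) := by
    rw [← mul_pow, Complex.mul_conj']
    push_cast
    ring
  simp_rw [hradial]
  rw [integral_complex_ofReal, integral_norm_pow_mul_wfun hL (by push_cast; linarith), moment]
  push_cast
  rw [mul_div_cancel_left₀ _ two_ne_zero]

lemma integral_pow_mul_conj_pow_mul_wfun_of_ne {a b : ℕ} (hab : a ≠ b) :
    ∫ ζ : ℂ, ζ ^ a * (starRingEnd ℂ) ζ ^ b * (wfun n L ζ : ℂ) = 0 := by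
  have hsub : (a : ℂ) - b ≠ 0 := sub_ne_zero.mpr (mod_cast hab)
  set u := Circle.exp (Real.pi / (a - b)) with hu
  have hu_pow : (u : ℂ) ^ a * (starRingEnd ℂ) (u : ℂ) ^ b = -1 := by
    rw [← Circle.coe_inv_eq_conj, hu, ← Circle.exp_neg, Circle.coe_exp, Circle.coe_exp,
      ← Complex.exp_nat_mul, ← Complex.exp_nat_mul, ← Complex.exp_add, ← Complex.exp_pi_mul_I]
    congr 1
    push_cast
    field_simp
    ring
  have hrotate := (rotation u).measurePreserving.integral_comp
    (rotation u).toHomeomorph.measurableEmbedding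
    fun ζ : ℂ => ζ ^ a * (starRingEnd ℂ) ζ ^ b * (wfun n L ζ : ℂ)
  have hneg (ζ : ℂ) :
      rotation u ζ ^ a * (starRingEnd ℂ) (rotation u ζ) ^ b * (wfun n L (rotation u ζ) : ℂ) =
        -(ζ ^ a * (starRingEnd ℂ) ζ ^ b * (wfun n L ζ : ℂ)) := by
    rw [wfun_eq_of_norm_eq ((rotation u).norm_map ζ), rotation_apply, map_mul, mul_pow, mul_pow]
    linear_combination ζ ^ a * (starRingEnd ℂ) ζ ^ b * (wfun n L ζ : ℂ) * hu_pow
  simp only [hneg, integral_neg] at hrotate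
  exact self_eq_neg.mp hrotate.symm

end Moments

section SkewProduct

open Polynomial (X C)

variable {n L : ℝ} {f g : Polynomial ℂ}

lemma skewIntegrand_conj (ζ : ℂ) :
    skewIntegrand n L f g ((starRingEnd ℂ) ζ) = -skewIntegrand n L g f ζ := by
  simp only [skewIntegrand, Complex.conj_conj, wfun_eq_of_norm_eq (Complex.norm_conj ζ)]
  ring

lemma integral_skewIntegrand_comm :
    ∫ ζ, skewIntegrand n L f g ζ = -∫ ζ, skewIntegrand n L g f ζ := by
  rw [← integral_neg, ← funext skewIntegrand_conj]
  exact (Complex.conjLIE.measurePreserving.integral_comp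
    Complex.conjLIE.toHomeomorph.measurableEmbedding _).symm

lemma integral_skewIntegrand_eq_zero_of_parity {ε : ℂ} (hε : ε ^ 2 = 1)
    (hf : ∀ z, f.eval (-z) = ε * f.eval z) (hg : ∀ z, g.eval (-z) = ε * g.eval z) :
    ∫ ζ, skewIntegrand n L f g ζ = 0 := by
  have hodd (ζ : ℂ) : skewIntegrand n L f g (-ζ) = -skewIntegrand n L f g ζ := by
    simp only [skewIntegrand, map_neg, hf, hg, wfun_eq_of_norm_eq (norm_neg ζ)]
    linear_combination -f.eval ζ * g.eval ((starRingEnd ℂ) ζ) *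
      ((ζ - (starRingEnd ℂ) ζ) * wfun n L ζ) * hε
  have h := integral_neg_eq_self (skewIntegrand n L f g) volume
  simp only [hodd, integral_neg] at h
  exact self_eq_neg.mp h.symm

lemma skewIntegrand_X_pow (a b : ℕ) (ζ : ℂ) :
    skewIntegrand n L (X ^ a) (X ^ b) ζ =
      ζ ^ (a + 1) * (starRingEnd ℂ) ζ ^ b * (wfun n L ζ : ℂ) -
        ζ ^ a * (starRingEnd ℂ) ζ ^ (b + 1) * (wfun n L ζ : ℂ) := by
  simp only [skewIntegrand, Polynomial.eval_pow, Polynomial.eval_X]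
  ring

lemma skewIntegrand_sum_left {ι : Type*} (s : Finset ι) (c : ι → ℂ) (p : ι → Polynomial ℂ) :
    skewIntegrand n L (∑ i ∈ s, C (c i) * p i) g =
      fun ζ => ∑ i ∈ s, c i * skewIntegrand n L (p i) g ζ := by
  funext ζ
  simp only [skewIntegrand, Polynomial.eval_finsetSum, Polynomial.eval_mul, Polynomial.eval_C,
    Finset.sum_mul, mul_assoc]

lemma skewIntegrand_sum_right {ι : Type*} (s : Finset ι) (c : ι → ℂ) (p : ι → Polynomial ℂ) :
    skewIntegrand n L f (∑ i ∈ s, C (c i) * p i) =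
      fun ζ => ∑ i ∈ s, c i * skewIntegrand n L f (p i) ζ := by
  funext ζ
  simp only [skewIntegrand, Polynomial.eval_finsetSum, Polynomial.eval_mul, Polynomial.eval_C,
    Finset.sum_mul, Finset.mul_sum]
  exact Finset.sum_congr rfl fun i _ => by ring

lemma integrable_skewIntegrand_X_pow {a b : ℕ} (hL : -1 / 2 < L) (hab : a + b < 4 * n + 1) :
    Integrable (skewIntegrand n L (X ^ a) (X ^ b)) := by
  rw [funext (skewIntegrand_X_pow a b)]
  exact (integrable_pow_mul_conj_pow_mul_wfun hL (by push_cast; linarith)).sub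
    (integrable_pow_mul_conj_pow_mul_wfun hL (by push_cast; linarith))

lemma integrable_skewIntegrand (hL : -1 / 2 < L) (hfg : f.natDegree + g.natDegree < 4 * n + 1) :
    Integrable (skewIntegrand n L f g) := by
  rw [f.as_sum_range_C_mul_X_pow, g.as_sum_range_C_mul_X_pow, skewIntegrand_sum_left]
  refine integrable_finsetSum _ fun i hi => Integrable.const_mul ?_ _
  rw [skewIntegrand_sum_right]
  refine integrable_finsetSum _ fun j hj => Integrable.const_mul ?_ _
  have hi : (i : ℝ) ≤ f.natDegree := mod_cast mem_range_succ_iff.mp hi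
  have hj : (j : ℝ) ≤ g.natDegree := mod_cast mem_range_succ_iff.mp hj
  exact integrable_skewIntegrand_X_pow hL (by linarith)

lemma integral_skewIntegrand_X_pow {a b : ℕ} (hL : -1 / 2 < L) (hab : a + b < 4 * n + 1) :
    ∫ ζ, skewIntegrand n L (X ^ a) (X ^ b) ζ =
      (if a + 1 = b then (moment n L b : ℂ) else 0) -
        if a = b + 1 then (moment n L a : ℂ) else 0 := by
  simp only [skewIntegrand_X_pow]
  rw [integral_sub (integrable_pow_mul_conj_pow_mul_wfun hL (by push_cast; linarith))
    (integrable_pow_mul_conj_pow_mul_wfun hL (by push_cast; linarith))]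
  congr 1 <;> split_ifs with h
  · subst h
    push_cast at hab
    exact integral_pow_mul_conj_pow_mul_wfun_self hL (by push_cast; linarith)
  · exact integral_pow_mul_conj_pow_mul_wfun_of_ne h
  · subst h
    push_cast at hab
    exact integral_pow_mul_conj_pow_mul_wfun_self hL (by push_cast; linarith)
  · exact integral_pow_mul_conj_pow_mul_wfun_of_ne h

end SkewProduct

section SkewPoly

open Polynomial (X C)
open ProbabilityTheory (beta)

variable {n L : ℝ} {k l : ℕ}

/-- The weights `1 / (Γ(n-l+1/2) Γ(l+L+1))` which are, up to normalisation, the coefficients of the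
even skew-orthogonal polynomials. -/
def skewCoeff (n L : ℝ) (l : ℕ) : ℝ :=
  (Real.Gamma (n - l + 1 / 2) * Real.Gamma (l + L + 1))⁻¹

lemma skewCoeff_pos (hL : -1 / 2 < L) (hl : l < n + 1 / 2) : 0 < skewCoeff n L l :=
  inv_pos.mpr <| mul_pos (Real.Gamma_pos_of_pos (by linarith)) <|
    Real.Gamma_pos_of_pos (by linarith [(l.cast_nonneg : (0 : ℝ) ≤ l)])

lemma skewCoeff_mul_moment (hL : -1 / 2 < L) (hl : l + 1 < n + 1 / 2) :
    skewCoeff n L l * moment n L (2 * l + 1) = skewCoeff n L (l + 1) * moment n L (2 * l + 2) := by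
  obtain ⟨u, rfl⟩ : ∃ u, n = u + l + 1 / 2 := ⟨n - l - 1 / 2, by ring⟩
  obtain ⟨v, rfl⟩ : ∃ v, L = v - l - 1 := ⟨L + l + 1, by ring⟩
  have hu : 0 < u := by linarith
  have hv : 0 < v := by linarith [(l.cast_nonneg : (0 : ℝ) ≤ l)]
  have := Real.Gamma_pos_of_pos hu
  have := Real.Gamma_pos_of_pos hv
  simp only [skewCoeff, moment, beta]
  push_cast
  rw [show u + l + 1 / 2 - l + 1 / 2 = u + 1 by ring,
    show u + l + 1 / 2 - (l + 1) + 1 / 2 = u by ring,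
    show l + (v - l - 1) + 1 = v by ring, show (l : ℝ) + 1 + (v - l - 1) + 1 = v + 1 by ring,
    show 2 * l + 1 + 2 * (v - l - 1) + 1 = 2 * v by ring,
    show 2 * l + 2 + 2 * (v - l - 1) + 1 = 2 * v + 1 by ring,
    show 2 * (u + l + 1 / 2) + 1 - (2 * l + 1) = 2 * u + 1 by ring,
    show 2 * (u + l + 1 / 2) + 1 - (2 * l + 2) = 2 * u by ring,
    show 2 * v + 1 + 2 * u = 2 * v + (2 * u + 1) by ring,
    Real.Gamma_add_one hu.ne', Real.Gamma_add_one hv.ne',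
    Real.Gamma_add_one (by positivity : 2 * u ≠ 0), Real.Gamma_add_one (by positivity : 2 * v ≠ 0)]
  field_simp

/-- The skew-orthogonal polynomials: `skewPoly n L k 0` and `skewPoly n L k 1` are the monic
polynomials `q_{2k}` and `q_{2k+1}` of degree `2k` and `2k+1`. -/
def skewPoly (n L : ℝ) (k : ℕ) : Fin 2 → Polynomial ℂ
  | 0 => ∑ l ∈ range (k + 1), C (skewCoeff n L l / skewCoeff n L k : ℂ) * X ^ (2 * l)
  | 1 => X ^ (2 * k + 1)

lemma degree_sum_range_C_mul_X_pow_two_mul_lt (c : ℕ → ℂ) (k : ℕ) :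
    (∑ l ∈ range k, C (c l) * (X : Polynomial ℂ) ^ (2 * l)).degree < ((2 * k : ℕ) : WithBot ℕ) := by
  rw [← Polynomial.mem_degreeLT]
  refine Submodule.sum_mem _ fun l hl => Polynomial.mem_degreeLT.mpr ?_
  have := mem_range.mp hl
  exact (Polynomial.degree_C_mul_X_pow_le _ _).trans_lt (mod_cast by omega)

lemma skewPoly_zero_eq (hL : -1 / 2 < L) (hk : k < n + 1 / 2) :
    skewPoly n L k 0 = X ^ (2 * k) +
      ∑ l ∈ range k, C (skewCoeff n L l / skewCoeff n L k : ℂ) * X ^ (2 * l) := by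
  have : (skewCoeff n L k : ℂ) ≠ 0 := mod_cast (skewCoeff_pos hL hk).ne'
  rw [skewPoly, Finset.sum_range_succ, div_self this, map_one, one_mul, add_comm]

lemma monic_skewPoly (hL : -1 / 2 < L) (hk : k < n + 1 / 2) (x : Fin 2) :
    (skewPoly n L k x).Monic := by
  fin_cases x
  · exact skewPoly_zero_eq hL hk ▸
      Polynomial.monic_X_pow_add (degree_sum_range_C_mul_X_pow_two_mul_lt _ k)
  · exact Polynomial.monic_X_pow _

lemma natDegree_skewPoly (hL : -1 / 2 < L) (hk : k < n + 1 / 2) (x : Fin 2) :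
    (skewPoly n L k x).natDegree = 2 * k + x := by
  fin_cases x
  · refine Polynomial.natDegree_eq_of_degree_eq_some ?_
    have hlt := degree_sum_range_C_mul_X_pow_two_mul_lt
      (fun l => skewCoeff n L l / skewCoeff n L k) k
    exact (congrArg _ (skewPoly_zero_eq hL hk)).trans <|
      (Polynomial.degree_add_eq_left_of_degree_lt (by simpa using hlt)).trans (by simp)
  · exact Polynomial.natDegree_X_pow _

lemma eval_neg_skewPoly (k : ℕ) (x : Fin 2) (z : ℂ) :
    (skewPoly n L k x).eval (-z) = (-1) ^ (x : ℕ) * (skewPoly n L k x).eval z := by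
  fin_cases x
  · simp [skewPoly, Polynomial.eval_finsetSum]
  · simp [skewPoly, Odd.neg_pow (odd_two_mul_add_one k)]

lemma integral_skewIntegrand_skewPoly_zero_one (hL : -1 / 2 < L) (hk : k < n) (hl : l < n) :
    ∫ ζ, skewIntegrand n L (skewPoly n L k 0) (skewPoly n L l 1) ζ =
      if k = l then (moment n L (2 * k + 1) : ℂ) else 0 := by
  have hdeg {i : ℕ} (hi : i ∈ range (k + 1)) :
      ((2 * i : ℕ) : ℝ) + (2 * l + 1 : ℕ) < 4 * n + 1 := by
    have hik : (i : ℝ) ≤ k := mod_cast mem_range_succ_iff.mp hi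
    push_cast
    linarith
  have hpair (i : ℕ) (hi : i ∈ range (k + 1)) :
      ∫ ζ, skewIntegrand n L (X ^ (2 * i)) (X ^ (2 * l + 1)) ζ =
        (if i = l then (moment n L (2 * l + 1) : ℂ) else 0) -
          if i = l + 1 then (moment n L (2 * l + 2) : ℂ) else 0 := by
    rw [integral_skewIntegrand_X_pow hL (hdeg hi)]
    congr 1
    · exact if_congr (by omega) rfl rfl
    · split_ifs with h₁ h₂ h₂
      exacts [by rw [h₁], by omega, by omega, rfl]
  simp only [skewPoly, skewIntegrand_sum_left]
  rw [integral_finsetSum _ fun i hi => (integrable_skewIntegrand_X_pow hL (hdeg hi)).const_mul _]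
  simp only [integral_const_mul]
  rw [Finset.sum_congr rfl fun i hi => by rw [hpair i hi]]
  simp only [mul_sub, mul_ite, mul_zero, Finset.sum_sub_distrib, Finset.sum_ite_eq', mem_range]
  have hk₀ : (skewCoeff n L k : ℂ) ≠ 0 := mod_cast (skewCoeff_pos hL (by linarith)).ne'
  rcases lt_trichotomy k l with h | rfl | h
  · simp [h.ne, show ¬ l < k + 1 by omega, show ¬ l + 1 < k + 1 by omega]
  · simp [hk₀]
  · have hlk : (l : ℝ) + 1 ≤ k := mod_cast h
    have hrec : (skewCoeff n L l : ℂ) * moment n L (2 * l + 1) =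
        skewCoeff n L (l + 1) * moment n L (2 * l + 2) :=
      mod_cast skewCoeff_mul_moment hL (by linarith)
    simp only [h.ne', show l < k + 1 by omega, show l + 1 < k + 1 by omega, if_true, if_false]
    linear_combination (skewCoeff n L k : ℂ)⁻¹ * hrec

lemma integral_skewIntegrand_skewPoly_eq_zero_of_ne (hL : -1 / 2 < L) (hk : k < n) (hl : l < n)
    (hkl : k ≠ l) (x y : Fin 2) :
    ∫ ζ, skewIntegrand n L (skewPoly n L k x) (skewPoly n L l y) ζ = 0 := by
  have hparity (x : Fin 2) :
      ∫ ζ, skewIntegrand n L (skewPoly n L k x) (skewPoly n L l x) ζ = 0 :=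
    integral_skewIntegrand_eq_zero_of_parity (by rw [← pow_mul]; simp)
      (eval_neg_skewPoly k x) (eval_neg_skewPoly l x)
  fin_cases x <;> fin_cases y
  · exact hparity 0
  · exact (integral_skewIntegrand_skewPoly_zero_one hL hk hl).trans (if_neg hkl)
  · rw [integral_skewIntegrand_comm]
    exact neg_eq_zero.mpr <|
      (integral_skewIntegrand_skewPoly_zero_one hL hl hk).trans (if_neg hkl.symm)
  · exact hparity 1

/-- The skew norm `r_k = ⟨q_{2k}, q_{2k+1}⟩ₛ`, up to the factor `π` in `dA = d²ζ/π`. -/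
def skewNorm (n L : ℝ) (k : ℕ) : ℝ :=
  2 * moment n L (2 * k + 1)

lemma skewNorm_pos (hL : -1 / 2 < L) (hk : k < n) : 0 < skewNorm n L k :=
  mul_pos two_pos (moment_pos hL (by push_cast; linarith))

lemma integral_skewIntegrand_skewPoly_sub (hL : -1 / 2 < L) (hk : k < n) :
    (∫ ζ, skewIntegrand n L (skewPoly n L k 0) (skewPoly n L k 1) ζ) -
        ∫ ζ, skewIntegrand n L (skewPoly n L k 1) (skewPoly n L k 0) ζ =
      skewNorm n L k := by
  rw [integral_skewIntegrand_comm (f := skewPoly n L k 1),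
    integral_skewIntegrand_skewPoly_zero_one hL hk hk, if_pos rfl, skewNorm]
  push_cast
  ring

end SkewPoly

section Kernel

open ProbabilityTheory (beta)

variable {n L : ℝ} {N k : ℕ}

lemma two_mul_pi_mul_Gamma_two_mul (u v : ℝ) :
    2 * Real.pi * (Real.Gamma (2 * u) * Real.Gamma (2 * v)) =
      2 ^ (2 * v + 2 * u - 1) * (Real.Gamma (v + 1 / 2) * Real.Gamma u) *
        (Real.Gamma (u + 1 / 2) * Real.Gamma v) := by
  have hdupu := Real.Gamma_mul_Gamma_add_half u
  have hdupv := Real.Gamma_mul_Gamma_add_half v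
  have hsqrt : √Real.pi * √Real.pi = Real.pi := Real.mul_self_sqrt Real.pi_pos.le
  have htwo : (2 : ℝ) ^ (1 - 2 * u) * 2 ^ (1 - 2 * v) * 2 ^ (2 * v + 2 * u - 1) = 2 := by
    rw [← Real.rpow_add two_pos, ← Real.rpow_add two_pos]
    ring_nf
    norm_num
  linear_combination -Real.Gamma (2 * u) * Real.Gamma (2 * v) * Real.pi * htwo -
    Real.Gamma (2 * u) * Real.Gamma (2 * v) * (2 : ℝ) ^ (1 - 2 * u) * 2 ^ (1 - 2 * v) *
      2 ^ (2 * v + 2 * u - 1) * hsqrt -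
    2 ^ (2 * v + 2 * u - 1) * Real.Gamma v * Real.Gamma (v + 1 / 2) * hdupu -
    2 ^ (2 * v + 2 * u - 1) * Real.Gamma (2 * u) * 2 ^ (1 - 2 * u) * √Real.pi * hdupv

lemma skewCoeff_mul_skewNorm (hL : -1 / 2 < L) (hk : k < n) :
    skewCoeff n L k * skewNorm n L k =
      2 ^ (2 * n + 2 * L + 1) * (Real.Gamma (k + L + 3 / 2) * Real.Gamma (n - k)) /
        Real.Gamma (2 * n + 2 * L + 2) := by
  obtain ⟨u, rfl⟩ : ∃ u, n = u + k := ⟨n - k, by ring⟩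
  obtain ⟨v, rfl⟩ : ∃ v, L = v - k - 1 := ⟨L + k + 1, by ring⟩
  have hu : 0 < u := by linarith
  have hv : 0 < v := by linarith [(k.cast_nonneg : (0 : ℝ) ≤ k)]
  have := Real.Gamma_pos_of_pos (by linarith : 0 < u + 1 / 2)
  have := Real.Gamma_pos_of_pos hv
  have hΓuv := Real.Gamma_pos_of_pos (by linarith : 0 < 2 * v + 2 * u)
  simp only [skewCoeff, skewNorm, moment, beta]
  push_cast
  rw [show u + k - k + 1 / 2 = u + 1 / 2 by ring, show k + (v - k - 1) + 1 = v by ring,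
    show k + (v - k - 1) + 3 / 2 = v + 1 / 2 by ring, show u + k - k = u by ring,
    show 2 * k + 1 + 2 * (v - k - 1) + 1 = 2 * v by ring,
    show 2 * (u + k) + 1 - (2 * k + 1) = 2 * u by ring,
    show 2 * (u + k) + 2 * (v - k - 1) + 2 = 2 * v + 2 * u by ring,
    show 2 * (u + k) + 2 * (v - k - 1) + 1 = 2 * v + 2 * u - 1 by ring]
  rw [eq_div_iff hΓuv.ne', inv_mul_eq_div, div_mul_eq_mul_div, div_eq_iff (by positivity),
    ← two_mul_pi_mul_Gamma_two_mul]
  field_simp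

lemma GK_coeff_eq (hL : -1 / 2 < L) (hk : k < n) (l : ℕ) :
    Real.pi * Real.Gamma (2 * n + 2 * L + 2) / 2 ^ (2 * n + 2 * L + 1) *
        (Real.Gamma (k + L + 3 / 2) * Real.Gamma (n - k) * Real.Gamma (n - l + 1 / 2) *
          Real.Gamma (l + L + 1))⁻¹ =
      Real.pi * (skewCoeff n L l / skewCoeff n L k / skewNorm n L k) := by
  rw [div_div, skewCoeff_mul_skewNorm hL hk, skewCoeff]
  simp only [div_eq_mul_inv, mul_inv, inv_inv]
  ring

lemma GK_eq_sum_skewPoly (hL : -1 / 2 < L) (hN : N < n + 1 / 2) {z w : ℂ} (hz : z ≠ 0)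
    (hw : w ≠ 0) :
    GK N n L z w = Real.pi * (z ^ (2 * L : ℂ) * w ^ (2 * L : ℂ)) *
      ∑ k ∈ range N, (skewPoly n L k 1).eval z * (skewPoly n L k 0).eval w / skewNorm n L k := by
  rw [GK, Finset.mul_sum, Finset.mul_sum]
  refine Finset.sum_congr rfl fun k hk => ?_
  have hk : k < n := by
    have : (k : ℝ) + 1 ≤ N := mod_cast mem_range.mp hk
    linarith
  have hcpow {z : ℂ} (hz : z ≠ 0) (d : ℕ) : z ^ ((d : ℂ) + 2 * L) = z ^ d * z ^ (2 * L : ℂ) := by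
    rw [Complex.cpow_add _ _ hz, Complex.cpow_natCast]
  simp only [skewPoly, Polynomial.eval_finsetSum, Polynomial.eval_mul, Polynomial.eval_C,
    Polynomial.eval_pow, Polynomial.eval_X, Finset.mul_sum, Finset.sum_div]
  refine Finset.sum_congr rfl fun l _ => ?_
  have hz_pow : z ^ ((2 * k + 2 * L + 1 : ℝ) : ℂ) = z ^ (2 * k + 1) * z ^ (2 * L : ℂ) := by
    rw [← hcpow hz]
    push_cast
    ring_nf
  have hw_pow : w ^ ((2 * l + 2 * L : ℝ) : ℂ) = w ^ (2 * l) * w ^ (2 * L : ℂ) := by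
    rw [← hcpow hw]
    push_cast
    rfl
  have htwo : (2 : ℂ) ^ ((2 * n + 2 * L + 1 : ℝ) : ℂ) = ((2 ^ (2 * n + 2 * L + 1) : ℝ) : ℂ) := by
    rw [Complex.ofReal_cpow zero_le_two, Complex.ofReal_ofNat]
  have hcoeff := congrArg Complex.ofReal (GK_coeff_eq hL hk l)
  rw [hz_pow, hw_pow, htwo]
  simp only [Complex.Gamma_ofReal]
  simp only [Complex.ofReal_mul, Complex.ofReal_div, Complex.ofReal_inv] at hcoeff
  linear_combination z ^ (2 * k + 1) * z ^ (2 * L : ℂ) * (w ^ (2 * l) * w ^ (2 * L : ℂ)) * hcoeff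

lemma cpow_mul_conj_cpow {ζ : ℂ} (hζ : ζ.arg ≠ Real.pi) (s : ℝ) :
    ζ ^ (s : ℂ) * (starRingEnd ℂ) ζ ^ (s : ℂ) = ((‖ζ‖ ^ (2 * s) : ℝ) : ℂ) := by
  rw [Complex.conj_cpow _ _ hζ, Complex.conj_ofReal, Complex.mul_conj', Complex.norm_cpow_real,
    mul_comm 2 s, Real.rpow_mul (norm_nonneg ζ), Real.rpow_two, Complex.ofReal_pow]

lemma KK_conj (hL : -1 / 2 < L) (hN : N < n + 1 / 2) {ζ : ℂ} (hζ : ζ.arg ≠ Real.pi) (hζ₀ : ζ ≠ 0) :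
    KK N n L ζ ((starRingEnd ℂ) ζ) = Real.pi * ((‖ζ‖ ^ (4 * L) : ℝ) : ℂ) *
      ∑ k ∈ range N, ((skewPoly n L k 1).eval ζ * (skewPoly n L k 0).eval ((starRingEnd ℂ) ζ) -
        (skewPoly n L k 1).eval ((starRingEnd ℂ) ζ) * (skewPoly n L k 0).eval ζ) /
          skewNorm n L k := by
  have hconj₀ : (starRingEnd ℂ) ζ ≠ 0 := (map_ne_zero _).mpr hζ₀
  have hpow := cpow_mul_conj_cpow hζ (2 * L)
  rw [show 2 * (2 * L) = 4 * L by ring] at hpow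
  push_cast at hpow
  rw [KK, GK_eq_sum_skewPoly hL hN hζ₀ hconj₀, GK_eq_sum_skewPoly hL hN hconj₀ hζ₀,
    mul_comm ((starRingEnd ℂ) ζ ^ _), hpow, ← mul_sub, ← Finset.sum_sub_distrib]
  simp only [sub_div]

end Kernel

section OnePoint

variable {n L : ℝ} {N : ℕ}

lemma R1_succ (m : ℕ) (n L : ℝ) (ζ : ℂ) :
    R1 (m + 1) n L ζ = Real.pi * ((m + 1) * (∫ ζs : Fin (m + 1) → ℂ, jointDen (m + 1) n L ζs)⁻¹ *
      ∫ ζs : Fin m → ℂ, jointDen (m + 1) n L (Fin.cons ζ ζs)) := by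
  simp only [R1, ZN, Nat.add_sub_cancel, pow_succ]
  push_cast
  field_simp
  rfl

lemma R1_eq_sum_skewPoly (hN : 1 ≤ N) (hL : -1 / 2 < L) (hn : N < n + 1 / 2) (ζ : ℂ) :
    (R1 N n L ζ : ℂ) = Real.pi * ∑ k ∈ range N,
      (skewIntegrand n L (skewPoly n L k 0) (skewPoly n L k 1) ζ -
        skewIntegrand n L (skewPoly n L k 1) (skewPoly n L k 0) ζ) / skewNorm n L k := by
  obtain ⟨m, rfl⟩ := Nat.exists_eq_add_of_le' hN
  have hlt (k : Fin (m + 1)) : ((k : ℕ) : ℝ) < n - 1 / 2 := by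
    have : ((k : ℕ) : ℝ) + 1 ≤ (m + 1 : ℕ) := mod_cast k.isLt
    linarith
  have hden (ζs : Fin (m + 1) → ℂ) := jointDen_eq_alternatingPairSum n L
    (fun a : Fin (m + 1) × Fin 2 => skewPoly n L a.1 a.2)
    (fun a => monic_skewPoly hL (by linarith [hlt a.1]) a.2)
    (fun a => natDegree_skewPoly hL (by linarith [hlt a.1]) a.2) ζs
  have hint (a b : Fin (m + 1) × Fin 2) :
      Integrable (skewIntegrand n L (skewPoly n L a.1 a.2) (skewPoly n L b.1 b.2)) := by
    refine integrable_skewIntegrand hL ?_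
    rw [natDegree_skewPoly hL (by linarith [hlt a.1]),
      natDegree_skewPoly hL (by linarith [hlt b.1])]
    have ha : ((a.2 : ℕ) : ℝ) ≤ 1 := mod_cast Nat.le_of_lt_succ a.2.isLt
    have hb : ((b.2 : ℕ) : ℝ) ≤ 1 := mod_cast Nat.le_of_lt_succ b.2.isLt
    push_cast
    linarith [hlt a.1, hlt b.1]
  have h := onePoint_eq_sum_of_skewOrthogonal hint
    (fun a b hab => integral_skewIntegrand_skewPoly_eq_zero_of_ne hL (by linarith [hlt a.1])
      (by linarith [hlt b.1]) (Fin.val_ne_of_ne hab) a.2 b.2)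
    (fun k => integral_skewIntegrand_skewPoly_sub hL (by linarith [hlt k]))
    (fun k => mod_cast (skewNorm_pos hL (by linarith [hlt k])).ne') ζ
  simp only [← hden, integral_complex_ofReal] at h
  rw [Finset.sum_range, ← h, R1_succ]
  push_cast
  rfl

end OnePoint

theorem one_point_correlation_general {N : ℕ} {n L : ℝ} (hN : 1 ≤ N) (hn : N < n + 1 / 2)
    (hL : -1 / 2 < L) (ζ : ℂ) :
    (R1 N n L ζ : ℂ) =
      ((starRingEnd ℂ) ζ - ζ) * KK N n L ζ ((starRingEnd ℂ) ζ) /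
        (((1 + ‖ζ‖ ^ 2) ^ (2 * n + 2 * L + 2) : ℝ) : ℂ) := by
  rw [R1_eq_sum_skewPoly hN hL hn]
  -- Both sides vanish on the real axis, which contains the branch cut of the powers in `KK`.
  by_cases hreal : (starRingEnd ℂ) ζ = ζ
  · simp [skewIntegrand, hreal]
  have hζ₀ : ζ ≠ 0 := fun h => hreal (by simp [h])
  have hζ : ζ.arg ≠ Real.pi := fun h => hreal (Complex.conj_eq_iff_im.mpr
    (Complex.arg_eq_pi_iff.mp h).2)
  have hw : (wfun n L ζ : ℂ) = ((‖ζ‖ ^ (4 * L) : ℝ) : ℂ) /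
      (((1 + ‖ζ‖ ^ 2) ^ (2 * n + 2 * L + 2) : ℝ) : ℂ) := by
    rw [← Complex.ofReal_div, wfun, Real.rpow_neg (by positivity), div_eq_mul_inv]
    ring_nf
  rw [KK_conj hL hn hζ hζ₀]
  simp only [skewIntegrand, hw, Finset.mul_sum, Finset.sum_div]
  exact Finset.sum_congr rfl fun k _ => by ring

/-- Proposition 1.1(a), k = 1: the one-point correlation function of the
symplectic induced spherical ensemble. -/
theorem one_point_correlation (N n M : ℕ) (L : ℝ) (hN : 1 ≤ N) (hn : N ≤ n)
    (hL : 0 ≤ L) (hM : 2*L = (M : ℝ)) (ζ : ℂ) :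
    (R1 N n L ζ : ℂ) =
      ((starRingEnd ℂ) ζ - ζ) * KK N n L ζ ((starRingEnd ℂ) ζ) /
        (((1 + ‖ζ‖ ^ 2) ^ (2*(n:ℝ)+2*L+2) : ℝ) : ℂ) :=
  one_point_correlation_general hN (by linarith [(mod_cast hn : (N : ℝ) ≤ n)]) (by linarith) ζ

end SI
end
end

section
/- Large-N expansion of the Christoffel–Darboux identity at regular points in the limit of weak non-unitarity (Proposition 2.2(b)). Under the weak non-unitarity setup with zooming point p = 1, as N → ∞ the complex derivative ∂_z κ̃_N(z,w) converges to F_w(z,w) uniformly for (z,w) in compact subsets of ℂ × ℂ, where F_w(z,w) := e^{−(z−w)²}( erfc(z+w−ρ/√2) − erfc(z+w+ρ/√2) ) − (1/√2)( e^{−(√2 z−ρ/2)²} + e^{−(√2 z+ρ/2)²} )·( erfc(√2 w−ρ/2) − erfc(√2 w+ρ/2) ). -/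
open MeasureTheory Filter Finset

noncomputable section

namespace SI

/-- The density value `δ = ((n+L)/N)(1+p²)⁻²`. -/
def dlt (N : ℕ) (n L p : ℝ) : ℝ := ((n+L)/N) * (1+p^2)^(-2 : ℝ)

/-- `√(Nδ)`. -/
def sc (N : ℕ) (n L p : ℝ) : ℝ := Real.sqrt (N * dlt N n L p)

/-- The rescaled kernel `κ̃_N(z,w)`. -/
def resc (N : ℕ) (n L p : ℝ) (z w : ℂ) : ℂ :=
  (((1+p^2) ^ (-3 : ℝ) : ℝ) : ℂ) * (((N * dlt N n L p) ^ (-(3/2) : ℝ) : ℝ) : ℂ) *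
  ((1 + ((p:ℂ) + z / (sc N n L p : ℂ))^2) * (1 + ((p:ℂ) + w / (sc N n L p : ℂ))^2))
      ^ ((-(n+L-1/2) : ℝ) : ℂ) *
  KK N n L ((p:ℂ) + z / (sc N n L p : ℂ)) ((p:ℂ) + w / (sc N n L p : ℂ))

/-- The entire extension of the error function: `erf(z) = (2/√π)∫₀¹ z e^{-s²z²} ds`. -/
def cerf (z : ℂ) : ℂ :=
  (2 / (Real.sqrt Real.pi : ℂ)) * ∫ s in (0:ℝ)..1, z * Complex.exp (-((s:ℂ)^2 * z^2))

/-- `erfc(z) = 1 - erf(z)`. -/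
def cerfc (z : ℂ) : ℂ := 1 - cerf z

/-- The inhomogeneous term `F_w` of the weak non-unitarity regime. -/
def Fweak (ρ : ℝ) (z w : ℂ) : ℂ :=
  Complex.exp (-(z-w)^2) *
      (cerfc (z+w-((ρ/Real.sqrt 2 : ℝ) : ℂ)) - cerfc (z+w+((ρ/Real.sqrt 2 : ℝ) : ℂ)))
    - (1/(Real.sqrt 2 : ℂ)) *
      (Complex.exp (-((Real.sqrt 2 : ℂ)*z - ((ρ/2 : ℝ):ℂ))^2)
        + Complex.exp (-((Real.sqrt 2 : ℂ)*z + ((ρ/2 : ℝ):ℂ))^2)) *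
      (cerfc ((Real.sqrt 2 : ℂ)*w - ((ρ/2 : ℝ):ℂ)) - cerfc ((Real.sqrt 2 : ℂ)*w + ((ρ/2 : ℝ):ℂ)))

/-- The admissible system sizes in the weak non-unitarity regime:
`N ≥ ρ²` for which `n = N²/ρ²` is an integer. -/
def Sweak (ρ : ℝ) : Set ℕ :=
  {N | ρ^2 ≤ (N : ℝ) ∧ ∃ nm : ℕ, (nm : ℝ) = (N:ℝ)^2/ρ^2}

open Complex (slitPlane)
open scoped Topology

/-!
The rescaled kernel is an explicit constant times an antisymmetrized double sum of products of
binomial weights `(α choose x) ζ^(2x) / (1 + ζ²)^α`. The `ζ`-derivative of a binomial weight is a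
multiple of a difference of two consecutive weights with `α - 1` in place of `α`, so differentiating
the double sum makes the inner sums telescope: what is left are two single sums and two edge terms.

By Stirling's formula, binomial weights with real `α → ∞`, with `x` at distance of order `√α` from
`α / 2` and with `ζ = 1 + c / √α` for a *complex* `c`, obey the de Moivre–Laplace theorem; the
profile is a Gaussian centred at `c`. In the limit of weak non-unitarity the summation index only
covers a window of width `2ρ / √2` around the centre on this scale, so the single sums are Riemann
sums of Gaussian integrals over `[-ρ / √2, ρ / √2]`, which are differences of values of `erfc`.
-/

/-! ### The Christoffel–Darboux identity -/

/-- The binomial coefficient `α` choose `x` for real arguments, defined through the Gamma function.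
At the poles of the denominator `Real.Gamma` vanishes, so that `a / 0 = 0` gives the correct value
`0`. -/
def gammaChoose (α x : ℝ) : ℝ :=
  Real.Gamma (α + 1) / (Real.Gamma (x + 1) * Real.Gamma (α - x + 1))

/-- The binomial weight `(α choose x) ζ^(2x) / (1 + ζ²)^α`. For `ζ > 0` this is the probability of
`x` successes in `α` Bernoulli trials with success probability `ζ² / (1 + ζ²)`. -/
def binomialWeight (α x : ℝ) (ζ : ℂ) : ℂ :=
  gammaChoose α x * ζ ^ ((2 * x : ℝ) : ℂ) * (1 + ζ ^ 2) ^ ((-α : ℝ) : ℂ)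

lemma mul_gammaChoose {α : ℝ} (hα : α ≠ 0) (x : ℝ) :
    x * gammaChoose α x = α * gammaChoose (α - 1) (x - 1) := by
  rcases eq_or_ne x 0 with rfl | hx
  · simp [gammaChoose, Real.Gamma_zero]
  · rw [gammaChoose, gammaChoose, Real.Gamma_add_one hα, Real.Gamma_add_one hx]
    ring_nf
    field_simp

lemma sub_mul_gammaChoose {α : ℝ} (hα : α ≠ 0) (x : ℝ) :
    (α - x) * gammaChoose α x = α * gammaChoose (α - 1) x := by
  have h := mul_gammaChoose hα (α - x)
  have hsymm (β y : ℝ) : gammaChoose β (β - y) = gammaChoose β y := by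
    rw [gammaChoose, gammaChoose, sub_sub_cancel, mul_comm (Real.Gamma _)]
  rwa [hsymm, show α - x - 1 = α - 1 - x by ring, hsymm] at h

lemma hasDerivAt_binomialWeight {α : ℝ} (hα : α ≠ 0) (x : ℝ) {ζ : ℂ} (hζ : ζ ∈ slitPlane)
    (hζ' : 1 + ζ ^ 2 ∈ slitPlane) :
    HasDerivAt (binomialWeight α x)
      (2 * α * ζ / (1 + ζ ^ 2) ^ 2 *
        (binomialWeight (α - 1) (x - 1) ζ - binomialWeight (α - 1) x ζ)) ζ := by
  have hζ0 : ζ ≠ 0 := Complex.slitPlane_ne_zero hζ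
  have hζ0' : 1 + ζ ^ 2 ≠ 0 := Complex.slitPlane_ne_zero hζ'
  have hpow : HasDerivAt (fun ζ : ℂ => ζ ^ ((2 * x : ℝ) : ℂ))
      ((2 * x : ℝ) * ζ ^ (((2 * x : ℝ) : ℂ) - 1) * 1) ζ :=
    (hasDerivAt_id ζ).cpow_const hζ
  have hpow' : HasDerivAt (fun ζ : ℂ => (1 + ζ ^ 2) ^ ((-α : ℝ) : ℂ))
      ((-α : ℝ) * (1 + ζ ^ 2) ^ (((-α : ℝ) : ℂ) - 1) * (2 * ζ)) ζ :=
    HasDerivAt.cpow_const (by simpa using (hasDerivAt_pow 2 ζ).const_add 1) hζ'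
  have hx : (x : ℂ) * gammaChoose α x = α * gammaChoose (α - 1) (x - 1) :=
    mod_cast mul_gammaChoose hα x
  have hαx : ((α : ℂ) - x) * gammaChoose α x = α * gammaChoose (α - 1) x :=
    mod_cast sub_mul_gammaChoose hα x
  refine ((hpow.const_mul (gammaChoose α x : ℂ)).mul hpow').congr_deriv ?_
  have hshift : ζ ^ ((2 * (x - 1) : ℝ) : ℂ) = ζ ^ ((2 * x : ℝ) : ℂ) / ζ ^ 2 := by
    rw [← Complex.cpow_ofNat, ← Complex.cpow_sub _ _ hζ0]
    push_cast
    ring_nf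
  have hpow_succ : (1 + ζ ^ 2) ^ ((-(α - 1) : ℝ) : ℂ) =
      (1 + ζ ^ 2) ^ ((-α : ℝ) : ℂ) * (1 + ζ ^ 2) := by
    rw [show ((-(α - 1) : ℝ) : ℂ) = ((-α : ℝ) : ℂ) + 1 by push_cast; ring,
      Complex.cpow_add _ _ hζ0', Complex.cpow_one]
  rw [binomialWeight, binomialWeight, hshift, hpow_succ, Complex.cpow_sub _ _ hζ0,
    Complex.cpow_sub _ _ hζ0', Complex.cpow_one, Complex.cpow_one]
  push_cast
  field_simp
  linear_combination (hx - ζ ^ 2 * hαx) * ζ ^ (2 * (x : ℂ)) * (1 + ζ ^ 2) ^ (-(α : ℂ))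

lemma sum_sum_sub_succ_mul {R : Type*} [CommRing R] (a b x y : ℕ → R) (N : ℕ) :
    ∑ k ∈ range N, ∑ l ∈ range (k + 1), ((a k - a (k + 1)) * y l - x k * (b l - b (l + 1))) =
      ∑ k ∈ range N, a k * y k + ∑ k ∈ range N, b (k + 1) * x k -
        a N * ∑ k ∈ range N, y k - b 0 * ∑ k ∈ range N, x k := by
  induction N with
  | zero => simp
  | succ N ih =>
    rw [sum_range_succ, ih, sum_sub_distrib, ← mul_sum, ← mul_sum, sum_range_sub']
    simp only [sum_range_succ]
    ring

/-- The antisymmetrized double sum of products of binomial weights which, up to an explicit factor,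
is the rescaled kernel. -/
def skewSum (N : ℕ) (α L : ℝ) (ζ η : ℂ) : ℂ :=
  ∑ k ∈ range N, ∑ l ∈ range (k + 1),
    (binomialWeight α (k + L + 1 / 2) ζ * binomialWeight α (l + L) η -
      binomialWeight α (k + L + 1 / 2) η * binomialWeight α (l + L) ζ)

/-- The right-hand side of the Christoffel–Darboux identity `hasDerivAt_skewSum`: two single sums
and two edge terms. -/
def christoffelDarbouxSum (N : ℕ) (α L : ℝ) (ζ η : ℂ) : ℂ :=
  ∑ k ∈ range N, binomialWeight (α - 1) (k + L - 1 / 2) ζ * binomialWeight α (k + L) η +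
    ∑ k ∈ range N, binomialWeight (α - 1) (k + L) ζ * binomialWeight α (k + L + 1 / 2) η -
    binomialWeight (α - 1) (N + L - 1 / 2) ζ * ∑ k ∈ range N, binomialWeight α (k + L) η -
    binomialWeight (α - 1) (L - 1) ζ * ∑ k ∈ range N, binomialWeight α (k + L + 1 / 2) η

lemma hasDerivAt_skewSum (N : ℕ) {α : ℝ} (hα : α ≠ 0) (L : ℝ) {ζ : ℂ} (hζ : ζ ∈ slitPlane)
    (hζ' : 1 + ζ ^ 2 ∈ slitPlane) (η : ℂ) :
    HasDerivAt (fun ζ => skewSum N α L ζ η)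
      (2 * α * ζ / (1 + ζ ^ 2) ^ 2 * christoffelDarbouxSum N α L ζ η) ζ := by
  let a (k : ℕ) : ℂ := binomialWeight (α - 1) (k + L - 1 / 2) ζ
  let b (l : ℕ) : ℂ := binomialWeight (α - 1) (l + L - 1) ζ
  have ha (k : ℕ) : binomialWeight (α - 1) (k + L + 1 / 2 - 1) ζ = a k ∧
      binomialWeight (α - 1) (k + L + 1 / 2) ζ = a (k + 1) := by
    simp only [a]
    push_cast
    constructor <;> congr 1 <;> ring
  have hb (l : ℕ) : b (l + 1) = binomialWeight (α - 1) (l + L) ζ := by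
    simp only [b]
    push_cast
    congr 1
    ring
  have hx (k : ℕ) : HasDerivAt (binomialWeight α (k + L + 1 / 2))
      (2 * α * ζ / (1 + ζ ^ 2) ^ 2 * (a k - a (k + 1))) ζ :=
    (ha k).1 ▸ (ha k).2 ▸ hasDerivAt_binomialWeight hα (k + L + 1 / 2) hζ hζ'
  have hy (l : ℕ) : HasDerivAt (binomialWeight α (l + L))
      (2 * α * ζ / (1 + ζ ^ 2) ^ 2 * (b l - b (l + 1))) ζ :=
    hb l ▸ hasDerivAt_binomialWeight hα (l + L) hζ hζ'
  refine (HasDerivAt.fun_sum fun (k : ℕ) _ => HasDerivAt.fun_sum fun (l : ℕ) _ =>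
    ((hx k).mul_const (binomialWeight α (l + L) η)).sub
      ((hy l).const_mul (binomialWeight α (k + L + 1 / 2) η))).congr_deriv ?_
  have htelescope := sum_sum_sub_succ_mul a b (fun k => binomialWeight α (k + L + 1 / 2) η)
    (fun l => binomialWeight α (l + L) η) N
  simp only [hb] at htelescope
  rw [christoffelDarbouxSum, show binomialWeight (α - 1) (L - 1) ζ = b 0 by simp [b],
    ← htelescope, mul_sum]
  simp only [hb, mul_sum]
  exact sum_congr rfl fun k _ => sum_congr rfl fun l _ => by ring

/-! ### The rescaled kernel -/

lemma mul_cpow_of_re_pos {a b : ℂ} (ha : 0 < a.re) (hb : 0 < b.re) (c : ℂ) :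
    (a * b) ^ c = a ^ c * b ^ c := by
  have ha0 : a ≠ 0 := fun h => by simp [h] at ha
  have hb0 : b ≠ 0 := fun h => by simp [h] at hb
  have harg := abs_lt.mp (Complex.abs_arg_lt_pi_div_two_iff.mpr (.inl ha))
  have hbrg := abs_lt.mp (Complex.abs_arg_lt_pi_div_two_iff.mpr (.inl hb))
  have hlog : Complex.log (a * b) = Complex.log a + Complex.log b :=
    Complex.log_mul ha0 hb0 ⟨by linarith, by linarith⟩
  rw [Complex.cpow_def_of_ne_zero (mul_ne_zero ha0 hb0), Complex.cpow_def_of_ne_zero ha0,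
    Complex.cpow_def_of_ne_zero hb0, hlog, add_mul, Complex.exp_add]

/-- The constant relating the kernel to `skewSum`: by the duplication formula it equals
`π Γ(2α+3) / (2^(2α+2) Γ(α+1)²)`. -/
def kernelConst (α : ℝ) : ℝ :=
  √Real.pi * Real.Gamma (α + 3 / 2) * Real.Gamma (α + 2) / Real.Gamma (α + 1) ^ 2

lemma pi_mul_Gamma_div_two_rpow {α : ℝ} (hα : 0 < α + 1) :
    Real.pi * Real.Gamma (2 * α + 3) / 2 ^ (2 * α + 2) =
      kernelConst α * Real.Gamma (α + 1) ^ 2 := by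
  have := (Real.Gamma_pos_of_pos hα).ne'
  have hdup := Real.Gamma_mul_Gamma_add_half (α + 3 / 2)
  have hpow : (2 : ℝ) ^ (1 - 2 * (α + 3 / 2)) = (2 ^ (2 * α + 2))⁻¹ := by
    rw [← Real.rpow_neg two_pos.le]; ring_nf
  rw [hpow, show α + 3 / 2 + 1 / 2 = α + 2 by ring,
    show 2 * (α + 3 / 2) = 2 * α + 3 by ring] at hdup
  rw [kernelConst, div_mul_cancel₀ _ (by positivity), mul_assoc, hdup]
  nth_rw 1 [← Real.mul_self_sqrt Real.pi_pos.le]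
  ring

lemma GK_mul_cpow (N : ℕ) {n L : ℝ} (hM : 0 < n + L) (ζ η : ℂ) :
    GK N n L ζ η * ((1 + ζ ^ 2) ^ ((-(n + L - 1 / 2) : ℝ) : ℂ) *
        (1 + η ^ 2) ^ ((-(n + L - 1 / 2) : ℝ) : ℂ)) =
      kernelConst (n + L - 1 / 2) * ∑ k ∈ range N, ∑ l ∈ range (k + 1),
        binomialWeight (n + L - 1 / 2) (k + L + 1 / 2) ζ *
          binomialWeight (n + L - 1 / 2) (l + L) η := by
  set α := n + L - 1 / 2 with hα
  have hconst : (Real.pi : ℂ) * Complex.Gamma ((2 * n + 2 * L + 2 : ℝ) : ℂ) /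
      (2 : ℂ) ^ ((2 * n + 2 * L + 1 : ℝ) : ℂ) = kernelConst α * Real.Gamma (α + 1) ^ 2 := by
    have h := pi_mul_Gamma_div_two_rpow (α := α) (by linarith)
    rw [show 2 * α + 3 = 2 * n + 2 * L + 2 by linarith,
      show 2 * α + 2 = 2 * n + 2 * L + 1 by linarith] at h
    rw [Complex.Gamma_ofReal, ← Complex.ofReal_ofNat, ← Complex.ofReal_cpow (by norm_num)]
    exact_mod_cast h
  rw [GK, hconst]
  simp only [mul_sum, sum_mul]
  refine sum_congr rfl fun k _ => sum_congr rfl fun l _ => ?_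
  rw [binomialWeight, binomialWeight, gammaChoose, gammaChoose]
  simp only [Complex.Gamma_ofReal, Complex.ofReal_div, Complex.ofReal_mul (Real.Gamma _)]
  rw [show k + L + 1 / 2 + 1 = k + L + 3 / 2 by ring,
    show α - (k + L + 1 / 2) + 1 = n - k by rw [hα]; ring,
    show α - (l + L) + 1 = n - l + 1 / 2 by rw [hα]; ring,
    show 2 * (k + L + 1 / 2) = 2 * k + 2 * L + 1 by ring, show 2 * (l + L) = 2 * l + 2 * L by ring]
  ring

lemma KK_mul_cpow (N : ℕ) {n L : ℝ} (hM : 0 < n + L) {ζ η : ℂ} (hζ : 0 < (1 + ζ ^ 2).re)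
    (hη : 0 < (1 + η ^ 2).re) :
    ((1 + ζ ^ 2) * (1 + η ^ 2)) ^ ((-(n + L - 1 / 2) : ℝ) : ℂ) * KK N n L ζ η =
      kernelConst (n + L - 1 / 2) * skewSum N (n + L - 1 / 2) L ζ η := by
  have h := GK_mul_cpow N hM ζ η
  have h' := GK_mul_cpow N hM η ζ
  rw [mul_cpow_of_re_pos hζ hη, KK]
  simp only [skewSum, sum_sub_distrib, mul_sub]
  rw [← h, ← h']
  ring

lemma natCast_mul_dlt {N : ℕ} (hN : N ≠ 0) (n L p : ℝ) :
    N * dlt N n L p = (n + L) / (1 + p ^ 2) ^ 2 := by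
  have hp : (0 : ℝ) < 1 + p ^ 2 := by positivity
  rw [dlt, Real.rpow_neg hp.le, Real.rpow_two]
  field_simp

lemma sc_eq {N : ℕ} (hN : N ≠ 0) (n L p : ℝ) : sc N n L p = √(n + L) / (1 + p ^ 2) := by
  rw [sc, natCast_mul_dlt hN, Real.sqrt_div' _ (by positivity), Real.sqrt_sq (by positivity)]

lemma resc_eq {N : ℕ} (hN : N ≠ 0) {n L : ℝ} (hM : 0 < n + L) (p : ℝ) {z w : ℂ}
    (hz : 0 < (1 + (p + z / sc N n L p) ^ 2 : ℂ).re)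
    (hw : 0 < (1 + (p + w / sc N n L p) ^ 2 : ℂ).re) :
    resc N n L p z w = ((n + L) ^ (-(3 / 2) : ℝ) * kernelConst (n + L - 1 / 2) : ℝ) *
      skewSum N (n + L - 1 / 2) L (p + z / sc N n L p) (p + w / sc N n L p) := by
  have hp : (0 : ℝ) < 1 + p ^ 2 := by positivity
  have hscale : (1 + p ^ 2 : ℝ) ^ (-3 : ℝ) * (N * dlt N n L p) ^ (-(3 / 2) : ℝ) =
      (n + L) ^ (-(3 / 2) : ℝ) := by
    rw [natCast_mul_dlt hN, Real.div_rpow hM.le (by positivity), ← Real.rpow_natCast_mul hp.le,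
      Real.rpow_neg hp.le, show ((2 : ℕ) : ℝ) * -(3 / 2) = -3 by norm_num, Real.rpow_neg hp.le]
    field_simp
  rw [resc, mul_assoc _ (_ ^ _) (KK _ _ _ _ _), KK_mul_cpow N hM hz hw, ← hscale]
  push_cast
  ring

lemma deriv_resc {N : ℕ} (hN : N ≠ 0) {n L : ℝ} (hM : 0 < n + L) (hα : n + L - 1 / 2 ≠ 0) (p : ℝ)
    {z w : ℂ} (hz : p + z / sc N n L p ∈ slitPlane)
    (hz' : 0 < (1 + (p + z / sc N n L p) ^ 2 : ℂ).re)
    (hw : 0 < (1 + (p + w / sc N n L p) ^ 2 : ℂ).re) :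
    deriv (fun z => resc N n L p z w) z =
      ((n + L) ^ (-(3 / 2) : ℝ) * kernelConst (n + L - 1 / 2) : ℝ) *
        (2 * (n + L - 1 / 2 : ℝ) * (p + z / sc N n L p) / (1 + (p + z / sc N n L p) ^ 2) ^ 2 *
          christoffelDarbouxSum N (n + L - 1 / 2) L (p + z / sc N n L p) (p + w / sc N n L p) *
          (1 / sc N n L p)) := by
  have hopen : ∀ᶠ z in 𝓝 z, 0 < (1 + (p + z / sc N n L p) ^ 2 : ℂ).re :=
    (Continuous.tendsto (by fun_prop) z).eventually (eventually_gt_nhds hz')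
  have hzoom : HasDerivAt (fun z : ℂ => p + z / sc N n L p) (1 / sc N n L p) z :=
    ((hasDerivAt_id z).div_const _).const_add _
  rw [EventuallyEq.deriv_eq (hopen.mono fun z hz => resc_eq hN hM p hz hw)]
  exact (((hasDerivAt_skewSum N hα L hz (.inl hz') _).comp z hzoom).const_mul _).deriv

/-! ### The Stirling approximation at real arguments -/

/-- The error in Stirling's approximation `log Γ(x+1) ≈ x log x - x + log(2πx)/2` at a real
argument. -/
def stirlingError (x : ℝ) : ℝ :=
  Real.log (Real.Gamma (x + 1)) -
    (x * Real.log x - x + Real.log x / 2 + Real.log (2 * Real.pi) / 2)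

lemma tendsto_stirlingError_natCast : Tendsto (fun n : ℕ => stirlingError n) atTop (𝓝 0) := by
  have h := (Stirling.tendsto_stirlingSeq_sqrt_pi.log (by positivity)).sub_const (Real.log √Real.pi)
  rw [sub_self] at h
  refine h.congr' ?_
  filter_upwards [eventually_ne_atTop 0] with n hn
  have hn' : (n : ℝ) ≠ 0 := Nat.cast_ne_zero.mpr hn
  rw [Stirling.log_stirlingSeq_formula, stirlingError, Real.Gamma_nat_eq_factorial,
    Real.log_mul two_ne_zero hn', Real.log_mul two_ne_zero Real.pi_ne_zero,
    Real.log_sqrt Real.pi_pos.le, Real.log_div hn' (Real.exp_ne_zero 1), Real.log_exp]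
  ring

lemma log_Gamma_natCast_add_bounds {n : ℕ} (hn : n ≠ 0) {s : ℝ} (hs : 0 < s) (hs' : s ≤ 1) :
    Real.log (Real.Gamma (n + 1)) + s * Real.log n ≤ Real.log (Real.Gamma (n + s + 1)) ∧
      Real.log (Real.Gamma (n + s + 1)) ≤
        Real.log (Real.Gamma (n + 1)) + s * Real.log (n + 1) := by
  have hfeq {y : ℝ} (hy : 0 < y) : (Real.log ∘ Real.Gamma) (y + 1) =
      (Real.log ∘ Real.Gamma) y + Real.log y := by
    simp only [Function.comp_apply]
    rw [Real.Gamma_add_one hy.ne', Real.log_mul hy.ne' (Real.Gamma_pos_of_pos hy).ne', add_comm]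
  have hge := Real.BohrMollerup.f_add_nat_ge Real.convexOn_log_Gamma hfeq
    (n := n + 1) (by lia) hs
  have hle := Real.BohrMollerup.f_add_nat_le Real.convexOn_log_Gamma hfeq
    (n := n + 1) (by lia) hs hs'
  rw [add_right_comm]
  push_cast [add_sub_cancel_right, Function.comp_apply] at hge hle
  exact ⟨hge, hle⟩

lemma abs_stirlingError_sub_le {n : ℕ} (hn : n ≠ 0) {s : ℝ} (hs : 0 < s) (hs' : s ≤ 1) :
    |stirlingError (n + s) - stirlingError n| ≤ 2 / n := by
  have hn0 : (0 : ℝ) < n := by positivity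
  obtain ⟨hge, hle⟩ := log_Gamma_natCast_add_bounds hn hs hs'
  have hlog : Real.log (n + s) = Real.log n + Real.log (1 + s / n) := by
    rw [← Real.log_mul hn0.ne' (by positivity)]
    field_simp
  have hlog' : Real.log (n + 1) = Real.log n + Real.log (1 + 1 / n) := by
    rw [← Real.log_mul hn0.ne' (by positivity)]
    field_simp
  have hupper : (n + s) * Real.log (1 + s / n) ≤ s + 1 / n := by
    have := Real.log_le_sub_one_of_pos (show 0 < 1 + s / n by positivity)
    calc (n + s) * Real.log (1 + s / n) ≤ (n + s) * (s / n) := by gcongr; linarith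
      _ = s + s * s / n := by field_simp
      _ ≤ s + 1 / n := by gcongr; nlinarith
  have hlower : s ≤ (n + s) * Real.log (1 + s / n) := by
    have := Real.one_sub_inv_le_log_of_pos (show 0 < 1 + s / n by positivity)
    calc s = (n + s) * (1 - (1 + s / n)⁻¹) := by field_simp; ring
      _ ≤ _ := by gcongr
  have hlogs : 0 ≤ Real.log (1 + s / n) ∧ Real.log (1 + s / n) ≤ 1 / n := by
    have := Real.log_le_sub_one_of_pos (show 0 < 1 + s / n by positivity)
    have : s / n ≤ 1 / n := by gcongr
    exact ⟨Real.log_nonneg (le_add_of_nonneg_right (by positivity)), by linarith⟩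
  have hlog1 : s * Real.log (1 + 1 / n) ≤ 1 / n := by
    have := Real.log_le_sub_one_of_pos (show (0 : ℝ) < 1 + 1 / n by positivity)
    have := Real.log_nonneg (show (1 : ℝ) ≤ 1 + 1 / n by simp)
    nlinarith
  have htwo : (2 : ℝ) / n = 1 / n + 1 / n := by ring
  rw [hlog'] at hle
  rw [abs_le, stirlingError, stirlingError, hlog, htwo]
  constructor <;> linarith

lemma tendsto_stirlingError : Tendsto stirlingError atTop (𝓝 0) := by
  have hceil : Tendsto (fun x : ℝ => ⌈x⌉₊ - 1) atTop atTop :=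
    (tendsto_sub_atTop_nat 1).comp tendsto_nat_ceil_atTop
  have herror : Tendsto (fun x : ℝ => stirlingError x - stirlingError (⌈x⌉₊ - 1 : ℕ))
      atTop (𝓝 0) := by
    refine squeeze_zero_norm' ?_
      ((tendsto_const_nhds (x := (2 : ℝ))).div_atTop (tendsto_natCast_atTop_atTop.comp hceil))
    filter_upwards [hceil.eventually_ne_atTop 0, eventually_gt_atTop 0] with x hx hx0
    have hcast : ((⌈x⌉₊ - 1 : ℕ) : ℝ) = ⌈x⌉₊ - 1 := Nat.cast_pred (Nat.ceil_pos.mpr hx0)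
    have h := abs_stirlingError_sub_le hx (s := x - (⌈x⌉₊ - 1 : ℕ))
      (by linarith [Nat.ceil_lt_add_one hx0.le]) (by linarith [Nat.le_ceil x])
    rwa [add_sub_cancel] at h
  simpa using herror.add (tendsto_stirlingError_natCast.comp hceil)

lemma Gamma_add_half_le {x : ℝ} (hx : 0 < x) :
    Real.Gamma (x + 1 / 2) ≤ √x * Real.Gamma x := by
  have h := Real.Gamma_mul_add_mul_le_rpow_Gamma_mul_rpow_Gamma hx (add_pos hx one_pos)
    (a := 1 / 2) (b := 1 / 2) (by norm_num) (by norm_num) (by norm_num)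
  have hΓ := Real.Gamma_pos_of_pos hx
  rw [← Real.sqrt_eq_rpow, ← Real.sqrt_eq_rpow, Real.Gamma_add_one hx.ne', Real.sqrt_mul hx.le,
    mul_left_comm, Real.mul_self_sqrt hΓ.le] at h
  convert h using 2
  ring

lemma tendsto_Gamma_add_half_div :
    Tendsto (fun x : ℝ => Real.Gamma (x + 1 / 2) / (√x * Real.Gamma x)) atTop (𝓝 1) := by
  have hlower : Tendsto (fun x : ℝ => √(x / (x + 1 / 2))) atTop (𝓝 1) := by
    have h : Tendsto (fun x : ℝ => (1 + 1 / 2 * x⁻¹)⁻¹) atTop (𝓝 1) := by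
      simpa using ((tendsto_inv_atTop_zero.const_mul (1 / 2 : ℝ)).const_add 1).inv₀ (by norm_num)
    refine (Real.sqrt_one ▸ h.sqrt :).congr' ?_
    filter_upwards [eventually_gt_atTop 0] with x hx
    congr 1
    field_simp
  refine tendsto_of_tendsto_of_tendsto_of_le_of_le' hlower tendsto_const_nhds ?_ ?_ <;>
    filter_upwards [eventually_gt_atTop 0] with x hx <;>
    have := Real.Gamma_pos_of_pos hx
  · have h := Gamma_add_half_le (by positivity : 0 < x + 1 / 2)
    rw [show x + 1 / 2 + 1 / 2 = x + 1 by ring, Real.Gamma_add_one hx.ne'] at h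
    rw [Real.sqrt_div hx.le, div_le_div_iff₀ (by positivity) (by positivity), ← mul_assoc,
      Real.mul_self_sqrt hx.le]
    linarith
  · exact (div_le_one (by positivity)).mpr (Gamma_add_half_le hx)

lemma tendsto_rpow_mul_kernelConst :
    Tendsto (fun M : ℝ => M ^ (-(3 / 2) : ℝ) * kernelConst (M - 1 / 2)) atTop (𝓝 √Real.pi) := by
  have h := ((tendsto_inv_atTop_zero.const_mul (1 / 2 : ℝ)).const_add 1).mul
    (tendsto_Gamma_add_half_div.inv₀ one_ne_zero) |>.const_mul √Real.pi
  simp only [mul_zero, add_zero, inv_one, mul_one] at h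
  refine h.congr' ?_
  filter_upwards [eventually_gt_atTop 0] with M hM
  have := Real.Gamma_pos_of_pos hM
  have := Real.Gamma_pos_of_pos (by positivity : 0 < M + 1 / 2)
  have hpow : M ^ (-(3 / 2) : ℝ) = (M * √M)⁻¹ := by
    rw [Real.rpow_neg hM.le, Real.sqrt_eq_rpow, ← Real.rpow_one_add' hM.le (by norm_num)]
    norm_num
  rw [kernelConst, show M - 1 / 2 + 3 / 2 = M + 1 by ring,
    show M - 1 / 2 + 2 = M + 1 / 2 + 1 by ring, show M - 1 / 2 + 1 = M + 1 / 2 by ring,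
    Real.Gamma_add_one hM.ne', Real.Gamma_add_one (by positivity), hpow]
  field_simp
  rw [Real.sq_sqrt hM.le]

/-! ### The de Moivre–Laplace theorem for binomial weights -/

section Asymptotics

variable {ι : Type*} {l : Filter ι}

section LogExpansion

variable {S : ι → ℝ} {t : ι → ℂ} {c : ℂ}

lemma tendsto_zero_of_tendsto_atTop_mul (hS : Tendsto S l atTop)
    (ht : Tendsto (fun i => S i * t i) l (𝓝 c)) : Tendsto t l (𝓝 0) := by
  have hinv : Tendsto (fun i => ((S i)⁻¹ : ℂ)) l (𝓝 0) := by
    simpa using (hS.inv_tendsto_atTop).ofReal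
  refine (zero_mul c ▸ hinv.mul ht).congr' ?_
  filter_upwards [hS.eventually_ne_atTop 0] with i hi
  rw [inv_mul_cancel_left₀ (mod_cast hi)]

lemma tendsto_sq_mul_log_one_add_sub (hS : Tendsto S l atTop)
    (ht : Tendsto (fun i => S i * t i) l (𝓝 c)) :
    Tendsto (fun i => (S i : ℂ) ^ 2 * (Complex.log (1 + t i) - t i)) l (𝓝 (-c ^ 2 / 2)) := by
  have hremainder : (fun i => Complex.log (1 + t i) - Complex.logTaylor 3 (t i)) =o[l]
      fun i => t i ^ 2 :=
    ((Complex.log_sub_logTaylor_isBigO 2).trans_isLittleO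
      (Asymptotics.isLittleO_pow_pow (by norm_num))).comp_tendsto
      (tendsto_zero_of_tendsto_atTop_mul hS ht)
  have hscaled : Tendsto (fun i => (S i : ℂ) ^ 2 *
      (Complex.log (1 + t i) - Complex.logTaylor 3 (t i))) l (𝓝 0) := by
    rw [← Asymptotics.isLittleO_one_iff ℝ]
    refine ((Asymptotics.isBigO_refl _ l).mul_isLittleO hremainder).trans_isBigO ?_
    simpa only [mul_pow] using (ht.pow 2).isBigO_one ℝ
  have h := hscaled.sub ((ht.pow 2).div_const 2)
  rw [zero_sub, ← neg_div] at h
  refine h.congr fun i => ?_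
  simp only [Complex.logTaylor_succ, Complex.logTaylor_zero, Pi.add_apply]
  push_cast
  ring

lemma tendsto_mul_log_one_add (hS : Tendsto S l atTop)
    (ht : Tendsto (fun i => S i * t i) l (𝓝 c)) :
    Tendsto (fun i => (S i : ℂ) * Complex.log (1 + t i)) l (𝓝 c) := by
  have hinv : Tendsto (fun i => ((S i)⁻¹ : ℂ)) l (𝓝 0) := by
    simpa using (hS.inv_tendsto_atTop).ofReal
  have h := (hinv.mul (tendsto_sq_mul_log_one_add_sub hS ht)).add ht
  rw [zero_mul, zero_add] at h
  refine h.congr' ?_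
  filter_upwards [hS.eventually_ne_atTop 0] with i hi
  have hi' : (S i : ℂ) ≠ 0 := mod_cast hi
  field_simp
  ring

end LogExpansion

lemma sqrt_mul_gammaChoose_eq_exp {α t : ℝ} (hα : 0 < α) (ht : -1 < t) (ht' : t < 1) :
    √α * 2 ^ (-α) * gammaChoose α (α / 2 * (1 + t)) =
      √(2 / Real.pi) * Real.exp (
        -(α / 2) * ((1 + t) * Real.log (1 + t) + (1 - t) * Real.log (1 - t)) -
          (Real.log (1 + t) + Real.log (1 - t)) / 2 +
          (stirlingError α - stirlingError (α / 2 * (1 + t)) -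
            stirlingError (α / 2 * (1 - t)))) := by
  have hp : 0 < 1 + t := by linarith
  have hm : 0 < 1 - t := by linarith
  have hΓ {y : ℝ} (hy : 0 < y) : Real.Gamma (y + 1) = Real.exp (Real.log (Real.Gamma (y + 1))) :=
    (Real.exp_log (Real.Gamma_pos_of_pos (by linarith))).symm
  have hlog {s : ℝ} (hs : 0 < s) :
      Real.log (α / 2 * s) = Real.log α - Real.log 2 + Real.log s := by
    rw [Real.log_mul (by positivity) hs.ne', Real.log_div hα.ne' two_ne_zero]
  rw [gammaChoose, show α - α / 2 * (1 + t) = α / 2 * (1 - t) by ring, hΓ hα,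
    hΓ (mul_pos (half_pos hα) hp), hΓ (mul_pos (half_pos hα) hm), ← Real.exp_add, ← Real.exp_sub,
    ← Real.exp_log (Real.sqrt_pos.mpr hα), Real.log_sqrt hα.le, Real.rpow_def_of_pos two_pos,
    ← Real.exp_log (show 0 < √(2 / Real.pi) by positivity), Real.log_sqrt (by positivity),
    Real.log_div two_ne_zero Real.pi_ne_zero, ← Real.exp_add, ← Real.exp_add, ← Real.exp_add]
  simp only [stirlingError, hlog hp, hlog hm, Real.log_mul two_ne_zero Real.pi_ne_zero]
  ring_nf

lemma tendsto_entropy {α t : ι → ℝ} {v : ℝ} (hα : Tendsto α l atTop)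
    (ht : Tendsto (fun i => √(α i) * t i) l (𝓝 v)) :
    Tendsto (fun i => α i / 2 * ((1 + t i) * Real.log (1 + t i) + (1 - t i) * Real.log (1 - t i)))
      l (𝓝 (v ^ 2 / 2)) := by
  have hS : Tendsto (fun i => √(α i)) l atTop := Real.tendsto_sqrt_atTop.comp hα
  have hp : Tendsto (fun i => (√(α i) : ℂ) * t i) l (𝓝 (v : ℂ)) := mod_cast ht.ofReal
  have hm : Tendsto (fun i => (√(α i) : ℂ) * -t i) l (𝓝 (-v : ℂ)) := by simpa using hp.neg
  have hre (s : ℝ) : (Complex.log (1 + s)).re = Real.log (1 + s) := by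
    rw [← Complex.log_ofReal_re, Complex.ofReal_add, Complex.ofReal_one]
  have hsq := (tendsto_sq_mul_log_one_add_sub hS hp).add (tendsto_sq_mul_log_one_add_sub hS hm)
  have hcross := hp.mul ((tendsto_mul_log_one_add hS hp).sub (tendsto_mul_log_one_add hS hm))
  have h := (Complex.continuous_re.tendsto _).comp ((hsq.add hcross).div_const (2 : ℂ))
  convert h.congr' ?_ using 2
  · norm_cast
    ring
  filter_upwards [hα.eventually_ge_atTop 0] with i hi
  have hrw : ((√(α i) : ℂ) ^ 2 * (Complex.log (1 + t i) - t i) +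
      (√(α i) : ℂ) ^ 2 * (Complex.log (1 + -t i) - -t i) +
        √(α i) * t i * (√(α i) * Complex.log (1 + t i) - √(α i) * Complex.log (1 + -t i))) / 2 =
        (√(α i) ^ 2 / 2 * (1 + t i) : ℝ) * Complex.log (1 + t i) +
          (√(α i) ^ 2 / 2 * (1 - t i) : ℝ) * Complex.log (1 + (-t i : ℝ)) := by
    push_cast
    ring
  rw [Function.comp_apply, hrw, Complex.add_re, Complex.re_ofReal_mul, Complex.re_ofReal_mul,
    hre, hre, Real.sq_sqrt hi]
  ring_nf

lemma tendsto_gammaChoose {α x : ι → ℝ} {v : ℝ} (hα : Tendsto α l atTop)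
    (hx : Tendsto (fun i => (2 * x i - α i) / √(α i)) l (𝓝 v)) :
    Tendsto (fun i => √(α i) * 2 ^ (-α i) * gammaChoose (α i) (x i)) l
      (𝓝 (√(2 / Real.pi) * Real.exp (-v ^ 2 / 2))) := by
  let t (i : ι) : ℝ := (2 * x i - α i) / α i
  have hS : Tendsto (fun i => √(α i)) l atTop := Real.tendsto_sqrt_atTop.comp hα
  have ht : Tendsto (fun i => √(α i) * t i) l (𝓝 v) := by
    refine hx.congr fun i => ?_
    rw [mul_div_left_comm, Real.sqrt_div_self', mul_one_div]
  have ht0 : Tendsto t l (𝓝 0) := by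
    simpa [Function.comp_def] using (Complex.continuous_re.tendsto _).comp
      (tendsto_zero_of_tendsto_atTop_mul (t := fun i => (t i : ℂ)) (c := v) hS (mod_cast ht.ofReal))
  have hp : Tendsto (fun i => 1 + t i) l (𝓝 1) := by simpa using ht0.const_add 1
  have hm : Tendsto (fun i => 1 - t i) l (𝓝 1) := by simpa using ht0.const_sub 1
  have herror {s : ι → ℝ} (hs : Tendsto s l (𝓝 1)) :
      Tendsto (fun i => stirlingError (α i / 2 * s i)) l (𝓝 0) :=
    tendsto_stirlingError.comp ((hα.atTop_div_const two_pos).atTop_mul_pos one_pos hs)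
  have hlogs := ((hp.log one_ne_zero).add (hm.log one_ne_zero)).div_const 2
  have h := (((tendsto_entropy hα ht).neg.sub hlogs).add
    (((tendsto_stirlingError.comp hα).sub (herror hp)).sub (herror hm))).rexp.const_mul
      √(2 / Real.pi)
  simp only [Real.log_one, add_zero, zero_div, sub_zero, ← neg_div] at h
  refine h.congr' ?_
  filter_upwards [hα.eventually_gt_atTop 0, ht0.eventually_const_lt neg_one_lt_zero,
    ht0.eventually_lt_const one_pos] with i hi hlt hlt'
  have hxt : x i = α i / 2 * (1 + t i) := by
    simp only [t]
    field_simp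
    ring
  rw [hxt, sqrt_mul_gammaChoose_eq_exp hi hlt hlt', neg_mul]
  rfl

section BinomialWeight

variable {α x : ι → ℝ} {ζ : ι → ℂ} {v : ℝ} {c : ℂ}

lemma cpow_mul_one_add_sq_cpow_eq_exp {ζ : ℂ} (hζ : ζ ≠ 0) (hζ' : 1 + ζ ^ 2 ≠ 0) (α x : ℝ) :
    ((2 ^ α : ℝ) : ℂ) * ζ ^ ((2 * x : ℝ) : ℂ) * (1 + ζ ^ 2) ^ ((-α : ℝ) : ℂ) =
      Complex.exp ((2 * x : ℝ) * Complex.log ζ - α * Complex.log ((1 + ζ ^ 2) / 2)) := by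
  have hlog : Complex.log (1 + ζ ^ 2) = Real.log 2 + Complex.log ((1 + ζ ^ 2) / 2) := by
    rw [← Complex.log_ofReal_mul two_pos (div_ne_zero hζ' two_ne_zero), Complex.ofReal_ofNat,
      mul_div_cancel₀ _ two_ne_zero]
  rw [Complex.cpow_def_of_ne_zero hζ, Complex.cpow_def_of_ne_zero hζ', hlog,
    Real.rpow_def_of_pos two_pos, Complex.ofReal_exp, ← Complex.exp_add, ← Complex.exp_add]
  push_cast
  ring_nf

lemma tendsto_two_rpow_mul_cpow_mul_one_add_sq_cpow (hα : Tendsto α l atTop)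
    (hx : Tendsto (fun i => (2 * x i - α i) / √(α i)) l (𝓝 v))
    (hζ : Tendsto (fun i => √(α i) * (ζ i - 1)) l (𝓝 c)) :
    Tendsto (fun i => ((2 ^ α i : ℝ) : ℂ) * ζ i ^ ((2 * x i : ℝ) : ℂ) *
      (1 + ζ i ^ 2) ^ ((-α i : ℝ) : ℂ)) l (𝓝 (Complex.exp (v * c - c ^ 2 / 2))) := by
  have hS : Tendsto (fun i => √(α i)) l atTop := Real.tendsto_sqrt_atTop.comp hα
  have hu := tendsto_zero_of_tendsto_atTop_mul hS hζ
  let s (i : ι) : ℂ := (ζ i - 1) + (ζ i - 1) ^ 2 / 2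
  have hs : Tendsto (fun i => √(α i) * s i) l (𝓝 c) := by
    have h := hζ.add ((hζ.mul hu).div_const 2)
    rw [mul_zero, zero_div, add_zero] at h
    exact h.congr fun i => by simp only [s]; ring
  have hexponent := ((hx.ofReal.mul (tendsto_mul_log_one_add hS hζ)).add
    ((tendsto_sq_mul_log_one_add_sub hS hζ).sub (tendsto_sq_mul_log_one_add_sub hS hs))).sub
      ((hζ.pow 2).div_const 2)
  rw [sub_self, add_zero] at hexponent
  have hone : Tendsto ζ l (𝓝 1) := by simpa using hu.add_const 1
  have hne : ∀ᶠ i in l, 1 + ζ i ^ 2 ≠ 0 :=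
    ((hone.pow 2).const_add 1).eventually_ne (by norm_num)
  refine hexponent.cexp.congr' ?_
  filter_upwards [hα.eventually_gt_atTop 0, hone.eventually_ne one_ne_zero, hne]
    with i hi hζ0 hζ0'
  have hS0 : (√(α i) : ℂ) ≠ 0 := mod_cast (Real.sqrt_pos.mpr hi).ne'
  have hsq : (α i : ℂ) = (√(α i) : ℂ) ^ 2 := mod_cast (Real.sq_sqrt hi.le).symm
  have hhalf : (1 + ζ i ^ 2) / 2 = 1 + s i := by simp only [s]; ring
  rw [cpow_mul_one_add_sq_cpow_eq_exp hζ0 hζ0', hhalf, add_sub_cancel]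
  congr 1
  push_cast
  rw [hsq]
  field_simp
  simp only [s]
  ring

lemma tendsto_sqrt_sub_div_sqrt (hα : Tendsto α l atTop) (d : ℝ) :
    Tendsto (fun i => √(α i) / √(α i - d)) l (𝓝 1) := by
  have h : Tendsto (fun i => √(1 - d / α i)) l (𝓝 1) := by
    simpa using ((tendsto_const_nhds (x := d)).div_atTop hα |>.const_sub 1).sqrt
  refine (inv_one (G := ℝ) ▸ h.inv₀ one_ne_zero).congr' ?_
  filter_upwards [hα.eventually_gt_atTop 0] with i hi
  rw [one_sub_div hi.ne', Real.sqrt_div' _ hi.le, inv_div]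

lemma tendsto_sqrt_mul_binomialWeight (d : ℝ) (hα : Tendsto α l atTop)
    (hx : Tendsto (fun i => (2 * x i - α i) / √(α i)) l (𝓝 v))
    (hζ : Tendsto (fun i => √(α i) * (ζ i - 1)) l (𝓝 c)) :
    Tendsto (fun i => √(α i) * binomialWeight (α i - d) (x i) (ζ i)) l
      (𝓝 (√(2 / Real.pi) * Complex.exp (-(v - c) ^ 2 / 2))) := by
  have hα' : Tendsto (fun i => α i - d) l atTop := tendsto_atTop_add_const_right _ _ hα
  have hS' : Tendsto (fun i => √(α i - d)) l atTop := Real.tendsto_sqrt_atTop.comp hα'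
  have hratio := tendsto_sqrt_sub_div_sqrt hα d
  have hx' : Tendsto (fun i => (2 * x i - (α i - d)) / √(α i - d)) l (𝓝 v) := by
    have h := (hx.mul hratio).add ((tendsto_const_nhds (x := d)).div_atTop hS')
    rw [mul_one, add_zero] at h
    refine h.congr' ?_
    filter_upwards [hα.eventually_gt_atTop 0] with i hi
    rw [div_mul_div_cancel₀ (Real.sqrt_pos.mpr hi).ne', ← add_div, sub_add]
  have hζ' : Tendsto (fun i => √(α i - d) * (ζ i - 1)) l (𝓝 c) := by
    have h := (hratio.inv₀ one_ne_zero).ofReal.mul hζ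
    simp only [inv_one, Complex.ofReal_one, one_mul] at h
    refine h.congr' ?_
    filter_upwards [hα.eventually_gt_atTop 0] with i hi
    have hS0 : (√(α i) : ℂ) ≠ 0 := mod_cast (Real.sqrt_pos.mpr hi).ne'
    push_cast
    field_simp
  have h := (hratio.ofReal.mul (tendsto_gammaChoose hα' hx').ofReal).mul
    (tendsto_two_rpow_mul_cpow_mul_one_add_sq_cpow hα' hx' hζ')
  convert h.congr' ?_ using 2
  · push_cast
    rw [one_mul, mul_assoc, ← Complex.exp_add]
    ring_nf
  · filter_upwards [hα'.eventually_gt_atTop 0] with i hi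
    have hS0 : (√(α i - d) : ℂ) ≠ 0 := mod_cast (Real.sqrt_pos.mpr hi).ne'
    have hpow : ((2 ^ (α i - d) : ℝ) : ℂ) ≠ 0 := mod_cast (Real.rpow_pos_of_pos two_pos _).ne'
    rw [binomialWeight, Real.rpow_neg two_pos.le]
    push_cast at hpow ⊢
    field_simp

end BinomialWeight

/-! ### Uniform convergence and Riemann sums -/

lemma tendstoUniformlyOn_of_forall_tendsto {X Y : Type*} [TopologicalSpace X] [UniformSpace Y]
    {F : ι → X → Y} {g : X → Y} {s : Set X} (hs : IsCompact s) (hg : ContinuousOn g s)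
    (h : ∀ x ∈ s, Tendsto (fun q : ι × X => F q.1 q.2) (l ×ˢ 𝓝[s] x) (𝓝 (g x))) :
    TendstoUniformlyOn F g l s := by
  rw [← tendstoLocallyUniformlyOn_iff_tendstoUniformlyOn_of_compact hs,
    tendstoLocallyUniformlyOn_iff_filter]
  intro x hx
  rw [tendstoUniformlyOnFilter_iff_tendsto]
  exact (((hg x hx).tendsto.comp tendsto_snd).prodMk_nhds (h x hx)).mono_right
    (nhds_le_uniformity _)

section RiemannSum

variable {E : Type*} [NormedAddCommGroup E]

lemma intervalIntegrable_comp_floor_succ (f : ℕ → E) (k : ℕ) :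
    IntervalIntegrable (fun x : ℝ => f ⌊x⌋₊) volume k (k + 1 : ℕ) := by
  refine (intervalIntegrable_const (c := f k)).congr_uIoo fun x hx => ?_
  rw [Set.uIoo_of_le (by simp)] at hx
  rw [Nat.floor_eq_on_Ico k x ⟨hx.1.le, mod_cast hx.2⟩]

variable [NormedSpace ℝ E]

lemma integral_comp_floor [CompleteSpace E] (f : ℕ → E) (K : ℕ) :
    ∫ x in (0 : ℝ)..K, f ⌊x⌋₊ = ∑ k ∈ range K, f k := by
  have h := intervalIntegral.sum_integral_adjacent_intervals (n := K)
    (a := fun k : ℕ => (k : ℝ)) fun k _ => intervalIntegrable_comp_floor_succ f k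
  rw [Nat.cast_zero] at h
  rw [← h]
  refine sum_congr rfl fun k _ => ?_
  rw [intervalIntegral.integral_congr_Ioo_of_le (g := fun _ => f k) (by simp)]
  · simp
  · intro x hx
    simp only [Nat.floor_eq_on_Ico k x ⟨hx.1.le, mod_cast hx.2⟩]

lemma tendsto_intervalIntegral_of_tendstoUniformlyOn {F : ι → ℝ → E} {g : ℝ → E} {a b : ℝ}
    (hF : ∀ᶠ i in l, IntervalIntegrable (F i) volume a b) (hg : IntervalIntegrable g volume a b)
    (h : TendstoUniformlyOn F g l (Set.uIcc a b)) :
    Tendsto (fun i => ∫ x in a..b, F i x) l (𝓝 (∫ x in a..b, g x)) := by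
  rw [Metric.tendsto_nhds]
  intro ε hε
  have hδ : 0 < ε / (|b - a| + 1) := by positivity
  filter_upwards [hF, Metric.tendstoUniformlyOn_iff.mp h _ hδ] with i hi hclose
  rw [dist_eq_norm, ← intervalIntegral.integral_sub hi hg]
  have hbound (x : ℝ) (hx : x ∈ Set.uIoc a b) : ‖F i x - g x‖ ≤ ε / (|b - a| + 1) := by
    rw [← dist_eq_norm, dist_comm]
    exact (hclose x (Set.uIoc_subset_uIcc hx)).le
  calc ‖∫ x in a..b, F i x - g x‖ ≤ ε / (|b - a| + 1) * |b - a| :=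
        intervalIntegral.norm_integral_le_of_norm_le_const hbound
    _ < ε := by
        rw [div_mul_eq_mul_div, div_lt_iff₀ (by positivity)]
        linarith

lemma tendsto_average_of_tendstoUniformlyOn [CompleteSpace E] {K : ι → ℕ} {f : ι → ℕ → E}
    {g : ℝ → E} (hK : ∀ᶠ i in l, K i ≠ 0) (hg : IntervalIntegrable g volume 0 1)
    (h : TendstoUniformlyOn (fun i (θ : ℝ) => f i ⌊K i * θ⌋₊) g l (Set.Icc 0 1)) :
    Tendsto (fun i => (K i : ℝ)⁻¹ • ∑ k ∈ range (K i), f i k) l (𝓝 (∫ θ in (0 : ℝ)..1, g θ)) := by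
  have hf_int : ∀ᶠ i in l, IntervalIntegrable (fun θ : ℝ => f i ⌊K i * θ⌋₊) volume 0 1 := by
    filter_upwards [hK] with i hi
    have hi' : (K i : ℝ) ≠ 0 := mod_cast hi
    have := IntervalIntegrable.trans_iterate (a := fun k : ℕ => (k : ℝ)) (n := K i)
      fun k _ => intervalIntegrable_comp_floor_succ (f i) k
    simpa [hi'] using this.comp_mul_left (c := K i)
  rw [← Set.uIcc_of_le zero_le_one] at h
  refine (tendsto_intervalIntegral_of_tendstoUniformlyOn hf_int hg h).congr' ?_
  filter_upwards [hK] with i hi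
  rw [intervalIntegral.integral_comp_mul_left (fun x => f i ⌊x⌋₊) (mod_cast hi), mul_zero, mul_one,
    integral_comp_floor]

end RiemannSum

lemma tendsto_natFloor_mul_div {x a : ι → ℝ} {θ : ℝ} (hx : Tendsto x l atTop)
    (ha : Tendsto a l (𝓝 θ)) (ha' : ∀ᶠ i in l, 0 ≤ a i) :
    Tendsto (fun i => (⌊x i * a i⌋₊ : ℝ) / x i) l (𝓝 θ) := by
  have hlower := ha.sub (tendsto_inv_atTop_zero.comp hx)
  rw [sub_zero] at hlower
  refine tendsto_of_tendsto_of_tendsto_of_le_of_le' hlower ha ?_ ?_ <;>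
    filter_upwards [hx.eventually_gt_atTop 0, ha'] with i hi hai
  · rw [le_div_iff₀ hi, Function.comp_apply, sub_mul, inv_mul_cancel₀ hi.ne', mul_comm]
    exact (Nat.sub_one_lt_floor _).le
  · rw [div_le_iff₀ hi, mul_comm (a i)]
    exact Nat.floor_le (mul_nonneg hi.le hai)

/-- Pairs `(i, k)` such that `i` tends to `l` while the centred and rescaled index
`(2k - N i) / S i` of the `k`-th of `N i` summands tends to `v`. -/
def nodeFilter (l : Filter ι) (N : ι → ℕ) (S : ι → ℝ) (v : ℝ) : Filter (ι × ℕ) :=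
  comap Prod.fst l ⊓ comap (fun q => (2 * q.2 - N q.1) / S q.1) (𝓝 v)

lemma tendsto_natFloor_nodeFilter {N : ι → ℕ} {S : ι → ℝ} {r : ℝ} (hN : Tendsto N l atTop)
    (hr : Tendsto (fun i => N i / S i) l (𝓝 r)) (θ : ℝ) :
    Tendsto (fun q : ι × ℝ => (q.1, ⌊N q.1 * q.2⌋₊)) (l ×ˢ 𝓝[Set.Icc 0 1] θ)
      (nodeFilter l N S (2 * r * θ - r)) := by
  refine tendsto_inf.mpr ⟨tendsto_comap_iff.mpr tendsto_fst, tendsto_comap_iff.mpr ?_⟩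
  have hN' : Tendsto (fun q : ι × ℝ => (N q.1 : ℝ)) (l ×ˢ 𝓝[Set.Icc 0 1] θ) atTop :=
    tendsto_natCast_atTop_atTop.comp (hN.comp tendsto_fst)
  have hr' : Tendsto (fun q : ι × ℝ => N q.1 / S q.1) (l ×ˢ 𝓝[Set.Icc 0 1] θ) (𝓝 r) :=
    hr.comp tendsto_fst
  have hfloor := tendsto_natFloor_mul_div hN' (tendsto_snd.mono_right nhdsWithin_le_nhds)
    (tendsto_snd.eventually (eventually_mem_nhdsWithin.mono fun _ hx => hx.1))
  have hlim := ((hfloor.const_mul 2).sub_const 1).mul hr'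
  rw [show (2 * θ - 1) * r = 2 * r * θ - r by ring] at hlim
  refine hlim.congr' ?_
  filter_upwards [hN'.eventually_gt_atTop 0] with q hpos
  simp only [Function.comp_apply]
  field_simp

lemma tendsto_sum_of_tendsto_nodeFilter {E : Type*} [NormedAddCommGroup E] [NormedSpace ℝ E]
    [CompleteSpace E] {N : ι → ℕ} {S : ι → ℝ} {r : ℝ} {f : ι × ℕ → E} {g : ℝ → E}
    (hN : Tendsto N l atTop) (hr : Tendsto (fun i => N i / S i) l (𝓝 r)) (hg : Continuous g)
    (h : ∀ v, Tendsto f (nodeFilter l N S v) (𝓝 (g v))) :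
    Tendsto (fun i => (2 / S i) • ∑ k ∈ range (N i), f (i, k)) l (𝓝 (∫ v in -r..r, g v)) := by
  have hgr : Continuous fun θ : ℝ => g (2 * r * θ - r) := by fun_prop
  have hN0 : ∀ᶠ i in l, N i ≠ 0 := hN.eventually_ne_atTop 0
  have hunif : TendstoUniformlyOn (fun i (θ : ℝ) => f (i, ⌊N i * θ⌋₊)) (fun θ => g (2 * r * θ - r))
      l (Set.Icc 0 1) :=
    tendstoUniformlyOn_of_forall_tendsto isCompact_Icc hgr.continuousOn
      fun θ _ => (h _).comp (tendsto_natFloor_nodeFilter hN hr θ)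
  have hlim := (hr.const_mul 2).smul (tendsto_average_of_tendstoUniformlyOn
    (f := fun i k => f (i, k)) hN0 (hgr.intervalIntegrable 0 1) hunif)
  rw [intervalIntegral.smul_integral_comp_mul_sub, mul_zero, zero_sub, mul_one,
    show 2 * r - r = r by ring] at hlim
  refine hlim.congr' (hN0.mono fun i hi => ?_)
  rw [smul_smul]
  congr 1
  field_simp

/-! ### The Christoffel–Darboux sum at weak non-unitarity -/

/-- The unnormalized Gaussian with mean `c`, the limiting profile of the binomial weights. -/
def gaussian (c : ℂ) (v : ℝ) : ℂ := Complex.exp (-(v - c) ^ 2 / 2)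

@[fun_prop]
lemma continuous_gaussian (c : ℂ) : Continuous (gaussian c) := by
  unfold gaussian
  fun_prop

lemma sqrt_two_div_pi_mul_self : (√(2 / Real.pi) : ℂ) * √(2 / Real.pi) = 2 / Real.pi := by
  rw [← Complex.ofReal_mul, Real.mul_self_sqrt (by positivity)]
  simp

section WeakNonUnitarity

variable {N : ι → ℕ} {L : ι → ℝ} {r v : ℝ} {ζ η : ι → ℂ} {c d : ℂ}

lemma tendsto_node (hM : Tendsto (fun i => 2 * L i + N i) l atTop) (a : ℝ) :
    Tendsto (fun q : ι × ℕ => (2 * (q.2 + L q.1 + a) - (2 * L q.1 + N q.1)) / √(2 * L q.1 + N q.1))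
      (nodeFilter l N (fun i => √(2 * L i + N i)) v) (𝓝 v) := by
  have hfst : Tendsto Prod.fst (nodeFilter l N (fun i => √(2 * L i + N i)) v) l :=
    tendsto_comap.mono_left inf_le_left
  have hv : Tendsto (fun q : ι × ℕ => (2 * q.2 - N q.1) / √(2 * L q.1 + N q.1))
      (nodeFilter l N (fun i => √(2 * L i + N i)) v) (𝓝 v) :=
    tendsto_comap.mono_left inf_le_right
  have hS := (tendsto_const_nhds (x := 2 * a)).div_atTop
    (Real.tendsto_sqrt_atTop.comp (hM.comp hfst))
  refine (add_zero v ▸ hv.add hS).congr fun q => ?_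
  rw [Function.comp_apply, Function.comp_apply, ← add_div]
  ring_nf

lemma tendsto_binomialWeight_node (hM : Tendsto (fun i => 2 * L i + N i) l atTop)
    (hζ : Tendsto (fun i => √(2 * L i + N i) * (ζ i - 1)) l (𝓝 c)) (a b : ℝ) :
    Tendsto (fun q : ι × ℕ => √(2 * L q.1 + N q.1) *
        binomialWeight (2 * L q.1 + N q.1 - b) (q.2 + L q.1 + a) (ζ q.1))
      (nodeFilter l N (fun i => √(2 * L i + N i)) v) (𝓝 (√(2 / Real.pi) * gaussian c v)) := by
  have hfst : Tendsto Prod.fst (nodeFilter l N (fun i => √(2 * L i + N i)) v) l :=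
    tendsto_comap.mono_left inf_le_left
  exact tendsto_sqrt_mul_binomialWeight b (hM.comp hfst) (tendsto_node hM a) (hζ.comp hfst)

lemma tendsto_sum_binomialWeight (hN : Tendsto N l atTop)
    (hM : Tendsto (fun i => 2 * L i + N i) l atTop)
    (hr : Tendsto (fun i => N i / √(2 * L i + N i)) l (𝓝 r))
    (hη : Tendsto (fun i => √(2 * L i + N i) * (η i - 1)) l (𝓝 d)) (a b : ℝ) :
    Tendsto (fun i => 2 * ∑ k ∈ range (N i), binomialWeight (2 * L i + N i - b) (k + L i + a) (η i))
      l (𝓝 (√(2 / Real.pi) * ∫ v in -r..r, gaussian d v)) := by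
  have hlim := tendsto_sum_of_tendsto_nodeFilter hN hr
    (g := fun v => √(2 / Real.pi) * gaussian d v) (by fun_prop)
    fun v => tendsto_binomialWeight_node hM hη a b
  rw [intervalIntegral.integral_const_mul] at hlim
  refine hlim.congr' ((hM.eventually_gt_atTop 0).mono fun i hi => ?_)
  have hS : (√(2 * L i + N i) : ℂ) ≠ 0 := mod_cast (Real.sqrt_pos.mpr hi).ne'
  simp only [← mul_sum, Complex.real_smul]
  push_cast
  field_simp

lemma tendsto_sum_binomialWeight_mul (hN : Tendsto N l atTop)
    (hM : Tendsto (fun i => 2 * L i + N i) l atTop)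
    (hr : Tendsto (fun i => N i / √(2 * L i + N i)) l (𝓝 r))
    (hζ : Tendsto (fun i => √(2 * L i + N i) * (ζ i - 1)) l (𝓝 c))
    (hη : Tendsto (fun i => √(2 * L i + N i) * (η i - 1)) l (𝓝 d)) (a b a' b' : ℝ) :
    Tendsto (fun i => 2 * √(2 * L i + N i) * ∑ k ∈ range (N i),
        binomialWeight (2 * L i + N i - b) (k + L i + a) (ζ i) *
          binomialWeight (2 * L i + N i - b') (k + L i + a') (η i))
      l (𝓝 (2 / Real.pi * ∫ v in -r..r, gaussian c v * gaussian d v)) := by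
  have hlim := tendsto_sum_of_tendsto_nodeFilter hN hr
    (g := fun v => √(2 / Real.pi) * gaussian c v * (√(2 / Real.pi) * gaussian d v)) (by fun_prop)
    fun v => (tendsto_binomialWeight_node hM hζ a b).mul (tendsto_binomialWeight_node hM hη a' b')
  simp only [mul_mul_mul_comm, sqrt_two_div_pi_mul_self] at hlim
  rw [intervalIntegral.integral_const_mul] at hlim
  refine hlim.congr' ((hM.eventually_gt_atTop 0).mono fun i hi => ?_)
  have hS : (√(2 * L i + N i) : ℂ) ≠ 0 := mod_cast (Real.sqrt_pos.mpr hi).ne'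
  simp only [← mul_sum, Complex.real_smul]
  push_cast
  field_simp

lemma tendsto_christoffelDarbouxSum (hN : Tendsto N l atTop)
    (hM : Tendsto (fun i => 2 * L i + N i) l atTop)
    (hr : Tendsto (fun i => N i / √(2 * L i + N i)) l (𝓝 r))
    (hζ : Tendsto (fun i => √(2 * L i + N i) * (ζ i - 1)) l (𝓝 c))
    (hη : Tendsto (fun i => √(2 * L i + N i) * (η i - 1)) l (𝓝 d)) :
    Tendsto (fun i => √(2 * L i + N i) *
        christoffelDarbouxSum (N i) (2 * L i + N i - 1 / 2) (L i) (ζ i) (η i)) l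
      (𝓝 (1 / Real.pi * (2 * (∫ v in -r..r, gaussian c v * gaussian d v) -
        (gaussian c r + gaussian c (-r : ℝ)) * ∫ v in -r..r, gaussian d v))) := by
  have hsum₁ := tendsto_sum_binomialWeight_mul hN hM hr hζ hη (-(1 / 2)) (3 / 2) 0 (1 / 2)
  have hsum₂ := tendsto_sum_binomialWeight_mul hN hM hr hζ hη 0 (3 / 2) (1 / 2) (1 / 2)
  have hsum₃ := tendsto_sum_binomialWeight hN hM hr hη 0 (1 / 2)
  have hsum₄ := tendsto_sum_binomialWeight hN hM hr hη (1 / 2) (1 / 2)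
  have hupper : Tendsto (fun i => (i, N i)) l (nodeFilter l N (fun i => √(2 * L i + N i)) r) := by
    refine tendsto_inf.mpr ⟨tendsto_comap_iff.mpr tendsto_id, tendsto_comap_iff.mpr ?_⟩
    exact hr.congr fun i => by simp only [Function.comp_apply]; ring
  have hlower : Tendsto (fun i => (i, 0)) l (nodeFilter l N (fun i => √(2 * L i + N i)) (-r)) := by
    refine tendsto_inf.mpr ⟨tendsto_comap_iff.mpr tendsto_id, tendsto_comap_iff.mpr ?_⟩
    exact hr.neg.congr fun i => by simp only [Function.comp_apply]; ring
  have hedge₁ := (tendsto_binomialWeight_node hM hζ (-(1 / 2)) (3 / 2)).comp hupper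
  have hedge₂ := (tendsto_binomialWeight_node hM hζ (-1) (3 / 2)).comp hlower
  convert (((hsum₁.add hsum₂).sub (hedge₁.mul hsum₃)).sub (hedge₂.mul hsum₄)).div_const 2 using 2
  · rename_i i
    have hα : 2 * L i + N i - 1 / 2 - 1 = 2 * L i + N i - 3 / 2 := by ring
    simp only [christoffelDarbouxSum, hα, Function.comp_apply, ← sub_eq_add_neg, add_zero,
      Nat.cast_zero, zero_add]
    ring
  · simp only [mul_mul_mul_comm, sqrt_two_div_pi_mul_self]
    ring

end WeakNonUnitarity

/-! ### The limit as a difference of error functions -/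

lemma hasDerivAt_cerf (z : ℂ) :
    HasDerivAt cerf (2 / √Real.pi * Complex.exp (-z ^ 2)) z := by
  have hdiff : Differentiable ℂ fun z : ℂ => Complex.exp (-z ^ 2) := by fun_prop
  obtain ⟨h, hh⟩ := hdiff.isExactOn_univ
  have hcerf : cerf = fun z => (2 / √Real.pi : ℂ) * (h z - h 0) := by
    funext z
    have hderiv (s : ℝ) :
        HasDerivAt (fun s : ℝ => h (s * z)) (z * Complex.exp (-((s : ℂ) ^ 2 * z ^ 2))) s := by
      have hline : HasDerivAt (fun s : ℝ => (s : ℂ) * z) z s := by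
        simpa using (hasDerivAt_id s).ofReal_comp.mul_const z
      exact ((hh _ (Set.mem_univ _)).comp s hline).congr_deriv (by simp only [mul_pow, mul_comm])
    rw [cerf, intervalIntegral.integral_eq_sub_of_hasDerivAt (fun s _ => hderiv s)
      (Continuous.intervalIntegrable (by fun_prop) _ _)]
    simp
  exact hcerf ▸ ((hh z (Set.mem_univ z)).sub_const (h 0)).const_mul _

lemma cerfc_sub_cerfc (a : ℂ) (R : ℝ) :
    cerfc (a - R) - cerfc (a + R) =
      2 / √Real.pi * ∫ t in -R..R, Complex.exp (-(a - t) ^ 2) := by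
  have hderiv (t : ℝ) : HasDerivAt (fun t : ℝ => cerfc (a - t))
      (2 / √Real.pi * Complex.exp (-(a - t) ^ 2)) t := by
    have hline : HasDerivAt (fun t : ℝ => a - (t : ℂ)) (-1) t :=
      (hasDerivAt_id t).ofReal_comp.const_sub a
    simpa [cerfc] using ((hasDerivAt_cerf (a - t)).comp t hline).const_sub 1
  rw [← intervalIntegral.integral_const_mul, intervalIntegral.integral_eq_sub_of_hasDerivAt
    (fun t _ => hderiv t) (Continuous.intervalIntegrable (by fun_prop) _ _)]
  simp

lemma gaussian_two_mul (c : ℂ) (v : ℝ) :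
    gaussian (2 * c) v = Complex.exp (-(√2 * c - (v / √2 : ℝ)) ^ 2) := by
  have hsq : (√2 : ℂ) ^ 2 = 2 := mod_cast Real.sq_sqrt zero_le_two
  obtain ⟨t, rfl⟩ : ∃ t, v = √2 * t := ⟨v / √2, by field_simp⟩
  rw [gaussian, mul_div_cancel_left₀ _ (by positivity)]
  congr 1
  push_cast
  linear_combination (c ^ 2 - t ^ 2 / 2) * hsq

lemma gaussian_two_mul_mul_gaussian_two_mul (z w : ℂ) (v : ℝ) :
    gaussian (2 * z) v * gaussian (2 * w) v =
      Complex.exp (-(z - w) ^ 2) * Complex.exp (-(z + w - v) ^ 2) := by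
  simp only [gaussian, ← Complex.exp_add]
  ring_nf

lemma cerfc_sub_cerfc_div_sqrt_two (w : ℂ) (r : ℝ) :
    cerfc (√2 * w - (r / √2 : ℝ)) - cerfc (√2 * w + (r / √2 : ℝ)) =
      √2 / √Real.pi * ∫ v in -r..r, gaussian (2 * w) v := by
  have hsq : (√2 : ℂ) ^ 2 = 2 := mod_cast Real.sq_sqrt zero_le_two
  simp only [gaussian_two_mul]
  rw [cerfc_sub_cerfc, intervalIntegral.integral_comp_div
    (fun t : ℝ => Complex.exp (-(√2 * w - t) ^ 2)) (by positivity), neg_div, Complex.real_smul]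
  linear_combination -(∫ t in -(r / √2)..r / √2, Complex.exp (-(√2 * w - t) ^ 2)) / √Real.pi * hsq

lemma Fweak_eq (ρ : ℝ) (z w : ℂ) :
    Fweak ρ z w = 1 / √Real.pi *
      (2 * (∫ v in -(ρ / √2)..ρ / √2, gaussian (2 * z) v * gaussian (2 * w) v) -
        (gaussian (2 * z) (ρ / √2 : ℝ) + gaussian (2 * z) (-(ρ / √2) : ℝ)) *
          ∫ v in -(ρ / √2)..ρ / √2, gaussian (2 * w) v) := by
  have hρ : ρ / 2 = ρ / √2 / √2 := by rw [div_div, Real.mul_self_sqrt zero_le_two]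
  simp only [gaussian_two_mul_mul_gaussian_two_mul, intervalIntegral.integral_const_mul]
  rw [Fweak, cerfc_sub_cerfc, hρ, cerfc_sub_cerfc_div_sqrt_two, gaussian_two_mul, gaussian_two_mul,
    neg_div, Complex.ofReal_neg, sub_neg_eq_add]
  field_simp

lemma continuous_Fweak (ρ : ℝ) : Continuous fun q : ℂ × ℂ => Fweak ρ q.1 q.2 := by
  have hcerfc : Continuous cerfc := continuous_const.sub <|
    continuous_iff_continuousAt.mpr fun z => (hasDerivAt_cerf z).continuousAt
  unfold Fweak
  fun_prop

/-! ### The limit of the derivative of the rescaled kernel -/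

lemma sc_add_natCast_one {N : ℕ} (hN : N ≠ 0) (L : ℝ) : sc N (L + N) L 1 = √(2 * L + N) / 2 := by
  rw [sc_eq hN, show L + N + L = 2 * L + N by ring]
  norm_num

/-- The point `ζ = p + z / √(Nδ)` in `resc`, in the regime `n = L + N`, `p = 1`. -/
def zoomPoint (N : ℕ) (L : ℝ) (z : ℂ) : ℂ :=
  (1 : ℝ) + z / sc N (L + N) L 1

lemma deriv_resc_add_natCast_one {N : ℕ} (hN : N ≠ 0) {L : ℝ} (hM : 1 / 2 < 2 * L + N) {z w : ℂ}
    (hz : zoomPoint N L z ∈ slitPlane) (hz' : 0 < (1 + zoomPoint N L z ^ 2).re)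
    (hw : 0 < (1 + zoomPoint N L w ^ 2).re) :
    deriv (fun z => resc N (L + N) L 1 z w) z =
      ((2 * L + N) ^ (-(3 / 2) : ℝ) * kernelConst (2 * L + N - 1 / 2) : ℝ) *
        (((1 - 1 / 2 * (2 * L + N)⁻¹ : ℝ) * (zoomPoint N L z / (1 + zoomPoint N L z ^ 2) ^ 2)) *
          (4 * (√(2 * L + N) * christoffelDarbouxSum N (2 * L + N - 1 / 2) L
            (zoomPoint N L z) (zoomPoint N L w)))) := by
  have hLN : L + N + L = 2 * L + N := by ring
  have hpos : 0 < 2 * L + N := by linarith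
  have hS : (√(2 * L + N) : ℂ) ≠ 0 := mod_cast (Real.sqrt_pos.mpr hpos).ne'
  have hα : (2 * L + N - 1 / 2 : ℝ) = √(2 * L + N) ^ 2 * (1 - 1 / 2 * (2 * L + N)⁻¹) := by
    rw [Real.sq_sqrt hpos.le]
    field_simp
  unfold zoomPoint at *
  rw [deriv_resc hN (by linarith) (by linarith) 1 hz hz' hw, hLN, sc_add_natCast_one hN,
    show ((2 * L + N - 1 / 2 : ℝ) : ℂ) = _ from congrArg _ hα]
  push_cast
  field_simp
  ring

section Limit

variable {N : ι → ℕ} {L : ι → ℝ} {r : ℝ} {z w : ι → ℂ} {c d : ℂ}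

lemma tendsto_sqrt_mul_zoomPoint_sub_one (hN : ∀ᶠ i in l, N i ≠ 0)
    (hM : Tendsto (fun i => 2 * L i + N i) l atTop) (hz : Tendsto z l (𝓝 c)) :
    Tendsto (fun i => √(2 * L i + N i) * (zoomPoint (N i) (L i) (z i) - 1)) l (𝓝 (2 * c)) := by
  refine (hz.const_mul 2).congr' ?_
  filter_upwards [hN, hM.eventually_gt_atTop 0] with i hi hMi
  have hS : (√(2 * L i + N i) : ℂ) ≠ 0 := mod_cast (Real.sqrt_pos.mpr hMi).ne'
  rw [zoomPoint, sc_add_natCast_one hi]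
  push_cast
  field_simp
  ring

lemma tendsto_zoomPoint (hN : ∀ᶠ i in l, N i ≠ 0) (hM : Tendsto (fun i => 2 * L i + N i) l atTop)
    (hz : Tendsto z l (𝓝 c)) : Tendsto (fun i => zoomPoint (N i) (L i) (z i)) l (𝓝 1) := by
  have hlim := (tendsto_zero_of_tendsto_atTop_mul (Real.tendsto_sqrt_atTop.comp hM)
    (tendsto_sqrt_mul_zoomPoint_sub_one hN hM hz)).add_const 1
  simpa only [sub_add_cancel, zero_add] using hlim

lemma tendsto_deriv_resc (hN : Tendsto N l atTop) (hM : Tendsto (fun i => 2 * L i + N i) l atTop)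
    (hr : Tendsto (fun i => N i / √(2 * L i + N i)) l (𝓝 r))
    (hz : Tendsto z l (𝓝 c)) (hw : Tendsto w l (𝓝 d)) :
    Tendsto (fun i => deriv (fun z => resc (N i) (L i + N i) (L i) 1 z (w i)) (z i)) l
      (𝓝 (1 / √Real.pi * (2 * (∫ v in -r..r, gaussian (2 * c) v * gaussian (2 * d) v) -
        (gaussian (2 * c) r + gaussian (2 * c) (-r : ℝ)) *
          ∫ v in -r..r, gaussian (2 * d) v))) := by
  have hN0 : ∀ᶠ i in l, N i ≠ 0 := hN.eventually_ne_atTop 0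
  have hζ := tendsto_zoomPoint hN0 hM hz
  have hre {ζ : ι → ℂ} (hζ : Tendsto ζ l (𝓝 1)) : ∀ᶠ i in l, 0 < (1 + ζ i ^ 2).re :=
    ((Complex.continuous_re.tendsto _).comp ((hζ.pow 2).const_add 1)).eventually
      (eventually_gt_nhds (by norm_num))
  have hconst := (tendsto_rpow_mul_kernelConst.comp hM).ofReal
  have hα := (((tendsto_inv_atTop_zero.comp hM).const_mul (1 / 2)).const_sub 1).ofReal
  have hfactor := hζ.div (((hζ.pow 2).const_add 1).pow 2) (by norm_num)
  have hCD := tendsto_christoffelDarbouxSum hN hM hr (tendsto_sqrt_mul_zoomPoint_sub_one hN0 hM hz)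
    (tendsto_sqrt_mul_zoomPoint_sub_one hN0 hM hw)
  convert (hconst.mul ((hα.mul hfactor).mul (hCD.const_mul 4))).congr' ?_ using 2
  · have hπ : (√Real.pi : ℂ) ^ 2 = Real.pi := mod_cast Real.sq_sqrt Real.pi_pos.le
    have hπ' : (√Real.pi : ℂ) ≠ 0 := mod_cast (Real.sqrt_pos.mpr Real.pi_pos).ne'
    rw [← hπ]
    push_cast
    field_simp
    ring
  · filter_upwards [hN0, hM.eventually_gt_atTop (1 / 2), hre hζ, hre (tendsto_zoomPoint hN0 hM hw),
      hζ.eventually (Complex.isOpen_slitPlane.mem_nhds Complex.one_mem_slitPlane)]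
      with i hNi hMi hz hw hslit
    exact (deriv_resc_add_natCast_one hNi hMi hslit hz hw).symm

lemma tendsto_atTop_of_tendsto_div_sqrt {a b : ι → ℝ} (ha : Tendsto a l atTop) (hr : 0 < r)
    (hab : Tendsto (fun i => a i / √(b i)) l (𝓝 r)) : Tendsto b l atTop := by
  have hprod := ha.atTop_mul_pos (inv_pos.mpr hr) (hab.inv₀ hr.ne')
  have hsqrt : Tendsto (fun i => √(b i)) l atTop := by
    refine hprod.congr' ?_
    filter_upwards [ha.eventually_ne_atTop 0] with i hi
    rw [inv_div, mul_div_cancel₀ _ hi]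
  refine (hsqrt.atTop_mul_atTop₀ hsqrt).congr' ?_
  filter_upwards [hsqrt.eventually_gt_atTop 0] with i hi
  exact Real.mul_self_sqrt (Real.sqrt_pos.mp hi).le

theorem CD_asymptotics_weak_general {ρ : ℝ} (hρ : 0 < ρ) (hN : Tendsto N l atTop)
    (hr : Tendsto (fun i => N i / √(2 * L i + N i)) l (𝓝 (ρ / √2))) {K : Set (ℂ × ℂ)}
    (hK : IsCompact K) :
    TendstoUniformlyOn
      (fun i (q : ℂ × ℂ) => deriv (fun z => resc (N i) (L i + N i) (L i) 1 z q.2) q.1)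
      (fun q => Fweak ρ q.1 q.2) l K := by
  have hM : Tendsto (fun i => 2 * L i + N i) l atTop :=
    tendsto_atTop_of_tendsto_div_sqrt (tendsto_natCast_atTop_atTop.comp hN) (by positivity) hr
  refine tendstoUniformlyOn_of_forall_tendsto hK (continuous_Fweak ρ).continuousOn fun q _ => ?_
  have hq : Tendsto (fun x : ι × ℂ × ℂ => x.2) (l ×ˢ 𝓝[K] q) (𝓝 q) :=
    tendsto_snd.mono_right nhdsWithin_le_nhds
  rw [Fweak_eq]
  exact tendsto_deriv_resc (hN.comp tendsto_fst) (hM.comp tendsto_fst) (hr.comp tendsto_fst)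
    hq.fst_nhds hq.snd_nhds

end Limit

end Asymptotics

lemma tendsto_div_sqrt_weakNonUnitarity {ρ : ℝ} (hρ : 0 < ρ) :
    Tendsto (fun N : ℕ => N / √(2 * ((N : ℝ) ^ 2 / ρ ^ 2 - N) + N)) atTop (𝓝 (ρ / √2)) := by
  have hlim := ((tendsto_inv_atTop_nhds_zero_nat (𝕜 := ℝ)).const_sub (2 / ρ ^ 2)).sqrt.inv₀
    (by rw [sub_zero]; positivity)
  rw [sub_zero, Real.sqrt_div zero_le_two, Real.sqrt_sq hρ.le, inv_div] at hlim
  refine hlim.congr' ((eventually_gt_atTop 0).mono fun N hN => ?_)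
  have hN' : (0 : ℝ) < N := mod_cast hN
  have hfactor : 2 * ((N : ℝ) ^ 2 / ρ ^ 2 - N) + N = N ^ 2 * (2 / ρ ^ 2 - (N : ℝ)⁻¹) := by
    field_simp
    ring
  simp only [hfactor]
  rw [Real.sqrt_mul (by positivity), Real.sqrt_sq hN'.le, ← div_div, div_self hN'.ne', one_div]

/-- Proposition 2.2(b): large-`N` expansion of the Christoffel–Darboux
identity at regular points in the limit of weak non-unitarity (zooming point `p = 1`). -/
theorem CD_asymptotics_weak (ρ : ℝ) (hρ : 0 < ρ) (K : Set (ℂ × ℂ)) (hK : IsCompact K) :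
    TendstoUniformlyOn
      (fun (N : ℕ) (q : ℂ × ℂ) =>
        deriv (fun z => resc N ((N:ℝ)^2/ρ^2) ((N:ℝ)^2/ρ^2 - N) 1 z q.2) q.1)
      (fun q => Fweak ρ q.1 q.2) (atTop ⊓ 𝓟 (Sweak ρ)) K := by
  have hN : Tendsto id (atTop ⊓ 𝓟 (Sweak ρ)) atTop := tendsto_id.mono_left inf_le_left
  have hr := (tendsto_div_sqrt_weakNonUnitarity hρ).mono_left (inf_le_left (b := 𝓟 (Sweak ρ)))
  simpa only [id, sub_add_cancel] using CD_asymptotics_weak_general hρ hN hr hK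

end SI
end
end
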